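/- arXiv:1008.5314 — 3 statements merged into one kernel-verified Lean document; each statement's English description precedes it below -/
import Mathlib

section
/- Let R be a graded polynomial ring, A ⊂ R a homogeneous ideal, f ∈ R a homogeneous element of degree d with A : f = A, and B ⊇ A a homogeneous ideal. Then for the ideal C = A + fB, the Hilbert function satisfies H_{R/C}(t) = H_{R/B}(t-d) + H_{R/A}(t) - H_{R/A}(t-d) for all t. Equivalently, H_C(t) = H_B(t-d) + H_A(t) - H_A(t-d). -/
open MvPolynomial

/-- An ideal of a polynomial ring is homogeneous (w.r.t. the standard grading). -/
def IsHomogeneousIdeal {K : Type*} [Field K] {n : ℕ}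
    (I : Ideal (MvPolynomial (Fin n) K)) : Prop :=
  ∀ p ∈ I, ∀ d : ℕ, MvPolynomial.homogeneousComponent d p ∈ I

/-- The Hilbert function of the ideal `I` in degree `d ∈ ℤ`: the `K`-dimension of the
space of homogeneous elements of degree `d` lying in `I` (and `0` in negative degrees). -/
noncomputable def idealHilbert {K : Type*} [Field K] {n : ℕ}
    (I : Ideal (MvPolynomial (Fin n) K)) (d : ℤ) : ℕ :=
  if d < 0 then 0 else
    Module.finrank K
      ((Submodule.restrictScalars K I) ⊓ MvPolynomial.homogeneousSubmodule (Fin n) K d.toNat :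
        Submodule K (MvPolynomial (Fin n) K))

/-- The Hilbert function of `R/I` in degree `d ∈ ℤ`. -/
noncomputable def quotHilbert {K : Type*} [Field K] {n : ℕ}
    (I : Ideal (MvPolynomial (Fin n) K)) (d : ℤ) : ℕ :=
  if d < 0 then 0 else
    Module.finrank K
      ((MvPolynomial.homogeneousSubmodule (Fin n) K d.toNat).map
        (Ideal.Quotient.mkₐ K I).toLinearMap)

/-!
Multiplication by `f` induces an isomorphism from `B / A`, shifted by `d`, onto `C / A`: its image
in `R / A` is `(A + fB) / A`, and it kills exactly `(A : f) / A = 0`. In each degree this is an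
equality of dimensions, which is the formula for ideals; the formula for quotients follows from
`H_I + H_{R/I} = H_R`. This works for every grading by an abelian group; regarding `R` as
`ℤ`-graded covers the degrees `t < d` along with all others.
-/

section LinearAlgebra

variable {K V W : Type*} [DivisionRing K] [AddCommGroup V] [Module K V] [AddCommGroup W]
  [Module K W]

theorem finrank_map_add_finrank_inf_ker (φ : V →ₗ[K] W) (N : Submodule K V)
    [FiniteDimensional K N] :
    Module.finrank K (N.map φ) + Module.finrank K (N ⊓ LinearMap.ker φ : Submodule K V) =
      Module.finrank K N := by
  rw [← LinearMap.finrank_range_add_finrank_ker (φ.domRestrict N), LinearMap.range_domRestrict,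
    LinearMap.ker_domRestrict, ← Submodule.finrank_map_subtype_eq N, Submodule.map_comap_subtype]

theorem finrank_sup_map_add_finrank_inf_comap (φ : V →ₗ[K] W) (N : Submodule K V)
    (P : Submodule K W) [FiniteDimensional K N] [FiniteDimensional K P] :
    Module.finrank K (P ⊔ N.map φ : Submodule K W) +
        Module.finrank K (N ⊓ P.comap φ : Submodule K V) =
      Module.finrank K P + Module.finrank K N := by
  have : FiniteDimensional K (N ⊓ P.comap φ : Submodule K V) :=
    Submodule.finiteDimensional_of_le inf_le_left
  have map_eq : (N ⊓ P.comap φ).map φ = P ⊓ N.map φ := by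
    rw [inf_comm P]
    exact SetLike.coe_injective (Set.image_inter_preimage φ N P)
  have ker_eq : N ⊓ P.comap φ ⊓ LinearMap.ker φ = N ⊓ LinearMap.ker φ := by
    rw [inf_assoc, inf_eq_right.mpr (LinearMap.ker_le_comap φ)]
  have dim_sup := Submodule.finrank_sup_add_finrank_inf_eq P (N.map φ)
  have dim_inf := finrank_map_add_finrank_inf_ker φ (N ⊓ P.comap φ)
  have dim_N := finrank_map_add_finrank_inf_ker φ N
  rw [map_eq, ker_eq] at dim_inf
  omega

end LinearAlgebra

section GradedPiece

variable {ι R S : Type*} [CommSemiring R] [CommSemiring S] [Algebra R S]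

/-- The degree `i` component `I ∩ 𝒜 i` of an ideal `I` of a ring graded by `𝒜`. -/
def gradedPiece (𝒜 : ι → Submodule R S) (I : Ideal S) (i : ι) : Submodule R S :=
  I.restrictScalars R ⊓ 𝒜 i

variable {𝒜 : ι → Submodule R S}

theorem mem_gradedPiece {I : Ideal S} {i : ι} {x : S} :
    x ∈ gradedPiece 𝒜 I i ↔ x ∈ I ∧ x ∈ 𝒜 i :=
  Iff.rfl

theorem gradedPiece_mono {I J : Ideal S} (h : I ≤ J) (i : ι) :
    gradedPiece 𝒜 I i ≤ gradedPiece 𝒜 J i :=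
  inf_le_inf_right _ h

theorem gradedPiece_sup [AddMonoid ι] [DecidableEq ι] [GradedAlgebra 𝒜] {I J : Ideal S}
    (hI : I.IsHomogeneous 𝒜) (hJ : J.IsHomogeneous 𝒜) (i : ι) :
    gradedPiece 𝒜 (I ⊔ J) i = gradedPiece 𝒜 I i ⊔ gradedPiece 𝒜 J i := by
  refine le_antisymm ?_ (sup_le (gradedPiece_mono le_sup_left i) (gradedPiece_mono le_sup_right i))
  rintro x ⟨hx, hxi⟩
  obtain ⟨a, ha, b, hb, rfl⟩ := Submodule.mem_sup.mp hx
  rw [← DirectSum.decompose_of_mem_same 𝒜 hxi, DirectSum.decompose_add, DirectSum.add_apply,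
    Submodule.coe_add]
  exact Submodule.add_mem_sup ⟨hI i ha, SetLike.coe_mem _⟩ ⟨hJ i hb, SetLike.coe_mem _⟩

variable [AddCommGroup ι] {f : S} {d : ι}

section GradedMonoid

variable [SetLike.GradedMonoid 𝒜]

theorem mul_mem_of_mem_sub (hf : f ∈ 𝒜 d) {x : S} {i : ι} (hx : x ∈ 𝒜 (i - d)) :
    f * x ∈ 𝒜 i := by
  simpa only [add_sub_cancel] using SetLike.mul_mem_graded hf hx

theorem gradedPiece_inf_comap_mulLeft (hf : f ∈ 𝒜 d) {I J : Ideal S} (hIJ : I ≤ J)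
    (hcolon : Submodule.colon I (Ideal.span {f}) = I) (i : ι) :
    gradedPiece 𝒜 J (i - d) ⊓ (gradedPiece 𝒜 I i).comap (LinearMap.mulLeft R f) =
      gradedPiece 𝒜 I (i - d) := by
  ext x
  have mul_mem_iff : f * x ∈ I ↔ x ∈ I := by
    rw [mul_comm, ← Ideal.mem_colon_span_singleton, hcolon]
  simp only [Submodule.mem_inf, Submodule.mem_comap, mem_gradedPiece, LinearMap.mulLeft_apply,
    mul_mem_iff]
  exact ⟨fun ⟨⟨_, hxi⟩, hxI, _⟩ ↦ ⟨hxI, hxi⟩,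
    fun ⟨hxI, hxi⟩ ↦ ⟨⟨hIJ hxI, hxi⟩, hxI, mul_mem_of_mem_sub hf hxi⟩⟩

end GradedMonoid

variable [DecidableEq ι] [GradedAlgebra 𝒜]

theorem gradedPiece_span_singleton_mul (hf : f ∈ 𝒜 d) {I : Ideal S} (hI : I.IsHomogeneous 𝒜)
    (i : ι) :
    gradedPiece 𝒜 (Ideal.span {f} * I) i =
      (gradedPiece 𝒜 I (i - d)).map (LinearMap.mulLeft R f) := by
  apply le_antisymm
  · rintro x ⟨hx, hxi⟩
    obtain ⟨b, hb, rfl⟩ := Ideal.mem_span_singleton_mul.mp hx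
    have component_eq : f * (DirectSum.decompose 𝒜 b (i - d) : S) = f * b := by
      rw [← DirectSum.coe_decompose_mul_add_of_left_mem 𝒜 hf, add_sub_cancel,
        DirectSum.decompose_of_mem_same 𝒜 hxi]
    exact ⟨_, ⟨hI (i - d) hb, SetLike.coe_mem _⟩, component_eq⟩
  · rintro _ ⟨b, ⟨hb, hbi⟩, rfl⟩
    exact ⟨Ideal.mem_span_singleton_mul.mpr ⟨b, hb, rfl⟩, mul_mem_of_mem_sub hf hbi⟩

theorem gradedPiece_sup_span_singleton_mul (hf : f ∈ 𝒜 d) {I J : Ideal S}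
    (hI : I.IsHomogeneous 𝒜) (hJ : J.IsHomogeneous 𝒜) (i : ι) :
    gradedPiece 𝒜 (I ⊔ Ideal.span {f} * J) i =
      gradedPiece 𝒜 I i ⊔ (gradedPiece 𝒜 J (i - d)).map (LinearMap.mulLeft R f) := by
  have span_homogeneous : (Ideal.span {f}).IsHomogeneous 𝒜 :=
    Ideal.homogeneous_span 𝒜 {f} (by rintro _ rfl; exact ⟨d, hf⟩)
  rw [gradedPiece_sup hI (span_homogeneous.mul hJ), gradedPiece_span_singleton_mul hf hJ]

end GradedPiece

section HilbertFunction

variable {ι K S : Type*} [Field K] [CommRing S] [Algebra K S] (𝒜 : ι → Submodule K S)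

/-- The Hilbert function `H_I` of an ideal of a `K`-algebra graded by `𝒜`, with junk value `0` in
degrees where the component of `I` is infinite-dimensional. -/
noncomputable def gradedIdealHilbert (I : Ideal S) (i : ι) : ℕ :=
  Module.finrank K (gradedPiece 𝒜 I i)

/-- The Hilbert function `H_{S/I}` of the quotient of a `K`-algebra graded by `𝒜`; the degree `i`
component of `S/I` is taken to be the image of `𝒜 i`. -/
noncomputable def gradedQuotHilbert (I : Ideal S) (i : ι) : ℕ :=
  Module.finrank K ((𝒜 i).map (Ideal.Quotient.mkₐ K I).toLinearMap)

instance finiteDimensional_gradedPiece (I : Ideal S) (i : ι) [FiniteDimensional K (𝒜 i)] :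
    FiniteDimensional K (gradedPiece 𝒜 I i) :=
  Submodule.finiteDimensional_of_le inf_le_right

theorem gradedQuotHilbert_add_gradedIdealHilbert (I : Ideal S) (i : ι)
    [FiniteDimensional K (𝒜 i)] :
    gradedQuotHilbert 𝒜 I i + gradedIdealHilbert 𝒜 I i = Module.finrank K (𝒜 i) := by
  have ker_eq : LinearMap.ker (Ideal.Quotient.mkₐ K I).toLinearMap = I.restrictScalars K := by
    ext x
    exact Ideal.Quotient.eq_zero_iff_mem
  rw [← finrank_map_add_finrank_inf_ker (Ideal.Quotient.mkₐ K I).toLinearMap (𝒜 i), ker_eq,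
    inf_comm]
  rfl

variable {𝒜} [AddCommGroup ι] [DecidableEq ι] [GradedAlgebra 𝒜]
  [∀ i, FiniteDimensional K (𝒜 i)] {A B : Ideal S} {f : S} {d : ι}

theorem gradedIdealHilbert_basicDoubleLink (hA : A.IsHomogeneous 𝒜) (hB : B.IsHomogeneous 𝒜)
    (hAB : A ≤ B) (hf : f ∈ 𝒜 d) (hcolon : Submodule.colon A (Ideal.span {f}) = A) (i : ι) :
    gradedIdealHilbert 𝒜 (A ⊔ Ideal.span {f} * B) i + gradedIdealHilbert 𝒜 A (i - d) =
      gradedIdealHilbert 𝒜 A i + gradedIdealHilbert 𝒜 B (i - d) := by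
  have dim_eq := finrank_sup_map_add_finrank_inf_comap (LinearMap.mulLeft K f)
    (gradedPiece 𝒜 B (i - d)) (gradedPiece 𝒜 A i)
  rwa [← gradedPiece_sup_span_singleton_mul hf hA hB,
    gradedPiece_inf_comap_mulLeft hf hAB hcolon] at dim_eq

theorem basicDoubleLink_hilbert_general (hA : A.IsHomogeneous 𝒜) (hB : B.IsHomogeneous 𝒜)
    (hAB : A ≤ B) (hf : f ∈ 𝒜 d) (hcolon : Submodule.colon A (Ideal.span {f}) = A)
    {C : Ideal S} (hC : C = A ⊔ Ideal.span {f} * B) :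
    (∀ i : ι, (gradedQuotHilbert 𝒜 C i : ℤ) =
        gradedQuotHilbert 𝒜 B (i - d) + gradedQuotHilbert 𝒜 A i - gradedQuotHilbert 𝒜 A (i - d)) ∧
    (∀ i : ι, (gradedIdealHilbert 𝒜 C i : ℤ) =
        gradedIdealHilbert 𝒜 B (i - d) + gradedIdealHilbert 𝒜 A i -
          gradedIdealHilbert 𝒜 A (i - d)) := by
  have ideal_formula (i : ι) := gradedIdealHilbert_basicDoubleLink hA hB hAB hf hcolon i
  rw [← hC] at ideal_formula
  refine ⟨fun i ↦ ?_, fun i ↦ by have := ideal_formula i; omega⟩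
  have ideal_C := ideal_formula i
  have quot_C := gradedQuotHilbert_add_gradedIdealHilbert 𝒜 C i
  have quot_A := gradedQuotHilbert_add_gradedIdealHilbert 𝒜 A i
  have quot_A_shift := gradedQuotHilbert_add_gradedIdealHilbert 𝒜 A (i - d)
  have quot_B_shift := gradedQuotHilbert_add_gradedIdealHilbert 𝒜 B (i - d)
  omega

end HilbertFunction

section IntGrading

/-- The standard grading of a polynomial ring indexed by `ℤ`, the components of negative degree
being zero: every variable has weight `1 : ℤ`. -/
noncomputable abbrev intGrading (σ R : Type*) [CommSemiring R] :
    ℤ → Submodule R (MvPolynomial σ R) :=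
  weightedHomogeneousSubmodule R (1 : σ → ℤ)

variable {σ R : Type*} [CommSemiring R]

noncomputable instance gradedAlgebra_intGrading : GradedAlgebra (intGrading σ R) :=
  weightedGradedAlgebra R (1 : σ → ℤ)

theorem weight_one_int (m : σ →₀ ℕ) :
    Finsupp.weight (1 : σ → ℤ) m = Finsupp.weight (1 : σ → ℕ) m := by
  simp [Finsupp.weight_apply, Finsupp.sum]

theorem intGrading_natCast (k : ℕ) : intGrading σ R k = homogeneousSubmodule σ R k := by
  ext p
  simp only [mem_weightedHomogeneousSubmodule, mem_homogeneousSubmodule, IsHomogeneous,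
    IsWeightedHomogeneous, weight_one_int, Nat.cast_inj]

theorem intGrading_of_neg {t : ℤ} (ht : t < 0) : intGrading σ R t = ⊥ := by
  rw [eq_bot_iff]
  intro p hp
  ext m
  refine IsWeightedHomogeneous.coeff_eq_zero hp m ?_
  rw [weight_one_int]
  omega

theorem decompose_intGrading (p : MvPolynomial σ R) (t : ℤ) :
    (DirectSum.decompose (intGrading σ R) p t : MvPolynomial σ R) =
      weightedHomogeneousComponent 1 t p :=
  weightedDecomposition.decompose'_apply R 1 p t

theorem decompose_intGrading_natCast (p : MvPolynomial σ R) (k : ℕ) :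
    (DirectSum.decompose (intGrading σ R) p k : MvPolynomial σ R) = homogeneousComponent k p := by
  ext m
  rw [decompose_intGrading, homogeneousComponent, coeff_weightedHomogeneousComponent,
    coeff_weightedHomogeneousComponent]
  simp only [weight_one_int, Nat.cast_inj]

instance moduleFinite_intGrading [Finite σ] (t : ℤ) : Module.Finite R (intGrading σ R t) := by
  rcases lt_or_ge t 0 with ht | ht
  · rw [intGrading_of_neg ht]
    infer_instance
  · lift t to ℕ using ht
    rw [intGrading_natCast]
    exact Module.Finite.iff_fg.mpr (homogeneousSubmodule_fg σ R t)

end IntGrading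

section StandardGrading

variable {K : Type*} [Field K] {n : ℕ} {I : Ideal (MvPolynomial (Fin n) K)}

theorem IsHomogeneousIdeal.isHomogeneous_intGrading (hI : IsHomogeneousIdeal I) :
    I.IsHomogeneous (intGrading (Fin n) K) := by
  intro t p hp
  rcases lt_or_ge t 0 with ht | ht
  · have component_mem := SetLike.coe_mem (DirectSum.decompose (intGrading (Fin n) K) p t)
    rw [(Submodule.mem_bot K).mp ((intGrading_of_neg ht).le component_mem)]
    exact I.zero_mem
  · lift t to ℕ using ht
    rw [decompose_intGrading_natCast]
    exact hI p hp t

theorem idealHilbert_eq_gradedIdealHilbert (t : ℤ) :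
    idealHilbert I t = gradedIdealHilbert (intGrading (Fin n) K) I t := by
  rcases lt_or_ge t 0 with ht | ht
  · rw [idealHilbert, if_pos ht, gradedIdealHilbert, gradedPiece, intGrading_of_neg ht, inf_bot_eq,
      finrank_bot]
  · lift t to ℕ using ht
    rw [idealHilbert, if_neg (by omega), gradedIdealHilbert, gradedPiece, intGrading_natCast,
      Int.toNat_natCast]

theorem quotHilbert_eq_gradedQuotHilbert (t : ℤ) :
    quotHilbert I t = gradedQuotHilbert (intGrading (Fin n) K) I t := by
  rcases lt_or_ge t 0 with ht | ht
  · rw [quotHilbert, if_pos ht, gradedQuotHilbert, intGrading_of_neg ht, Submodule.map_bot,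
      finrank_bot]
  · lift t to ℕ using ht
    rw [quotHilbert, if_neg (by omega), gradedQuotHilbert, intGrading_natCast, Int.toNat_natCast]

end StandardGrading

/-- Hilbert function of a Basic Double Link `C = A + f·B`:
if `A ⊆ B` are homogeneous ideals, `f` is homogeneous of degree `d` with `A : f = A`, then
`H_{R/C}(t) = H_{R/B}(t-d) + H_{R/A}(t) - H_{R/A}(t-d)` for all `t`, and equivalently
`H_C(t) = H_B(t-d) + H_A(t) - H_A(t-d)`. -/
theorem basicDoubleLink_hilbert {K : Type*} [Field K] {n : ℕ}
    (A B : Ideal (MvPolynomial (Fin n) K))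
    (hA : IsHomogeneousIdeal A) (hB : IsHomogeneousIdeal B) (hAB : A ≤ B)
    (f : MvPolynomial (Fin n) K) (d : ℕ) (hf : f.IsHomogeneous d)
    (hcolon : Submodule.colon A (Ideal.span {f}) = A)
    (C : Ideal (MvPolynomial (Fin n) K)) (hC : C = A ⊔ Ideal.span {f} * B) :
    (∀ t : ℤ, (quotHilbert C t : ℤ) =
        quotHilbert B (t - d) + quotHilbert A t - quotHilbert A (t - d)) ∧
    (∀ t : ℤ, (idealHilbert C t : ℤ) =
        idealHilbert B (t - d) + idealHilbert A t - idealHilbert A (t - d)) := by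
  simp only [idealHilbert_eq_gradedIdealHilbert, quotHilbert_eq_gradedQuotHilbert]
  exact basicDoubleLink_hilbert_general hA.isHomogeneous_intGrading hB.isHomogeneous_intGrading
    hAB (by rwa [intGrading_natCast]) hcolon hC
end

section
/- Let X = (x_{ij}) be an m×n matrix of distinct indeterminates with m ≤ n, and let σ be a diagonal term order on K[X]. Then the set of maximal (m×m) minors of X is a Gröbner basis, with respect to σ, of the ideal I_m(X) they generate; in particular, in(I_m(X)) is generated by the squarefree monomials x_{1,j_1}x_{2,j_2}···x_{m,j_m} for all 1 ≤ j_1 < j_2 < ··· < j_m ≤ n. -/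
open MvPolynomial

variable {K : Type*} [Field K]

/-- The leading exponent (multidegree) of a polynomial with respect to a monomial order. -/
noncomputable def leadExp {σ : Type*} (m : MonomialOrder σ) (p : MvPolynomial σ K) : σ →₀ ℕ :=
  m.toSyn.symm (p.support.sup fun e => m.toSyn e)

/-- The initial ideal of `I` with respect to a monomial order. -/
noncomputable def initialIdeal {σ : Type*} (m : MonomialOrder σ)
    (I : Ideal (MvPolynomial σ K)) : Ideal (MvPolynomial σ K) :=
  Ideal.span ((fun p => (MvPolynomial.monomial (leadExp m p) (1 : K))) ''
    {p | p ∈ I ∧ p ≠ 0})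

/-- A set `G` is a Gröbner basis of an ideal `J`. -/
def IsGroebnerBasis {σ : Type*} (m : MonomialOrder σ)
    (J : Ideal (MvPolynomial σ K)) (G : Set (MvPolynomial σ K)) : Prop :=
  G ⊆ (J : Set (MvPolynomial σ K)) ∧
    Ideal.span ((fun p => (MvPolynomial.monomial (leadExp m p) (1 : K))) ''
      {p | p ∈ G ∧ p ≠ 0}) = initialIdeal m J

/-- The set of maximal minors of the generic `m × n` matrix `X = (x_{ij})`. -/
def maximalMinors (K : Type*) [Field K] (m n : ℕ) : Set (MvPolynomial (Fin m × Fin n) K) :=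
  {p | ∃ c : Fin m → Fin n, StrictMono c ∧
    p = Matrix.det (Matrix.of fun i j : Fin m => (MvPolynomial.X (i, c j) :
      MvPolynomial (Fin m × Fin n) K))}

/-- A monomial order on the variables of the generic `m × n` matrix is diagonal if the leading
term of the determinant of every square submatrix is the product of its diagonal entries. -/
def IsDiagonalOrder (K : Type*) [Field K] (m n : ℕ) (mo : MonomialOrder (Fin m × Fin n)) :
    Prop :=
  ∀ (k : ℕ) (r : Fin k → Fin m) (c : Fin k → Fin n), StrictMono r → StrictMono c →
    leadExp mo (Matrix.det (Matrix.of fun i j : Fin k => (MvPolynomial.X (r i, c j) :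
        MvPolynomial (Fin m × Fin n) K))) = ∑ i : Fin k, Finsupp.single (r i, c i) 1

/-!
Two monomial multiples of maximal minors with the same leading exponent `u` are congruent modulo
the multiples with smaller leading exponents. Choosing one multiple for each attainable `u`
therefore spans the ideal over `K`, and since the chosen multiples have distinct leading exponents,
the leading exponent of every nonzero element of the ideal is one of theirs.

For two minors whose columns differ only in position `i`, the congruence is the Laplace expansion of
an `(m + 1) × (m + 1)` determinant in which row `i` occurs twice: since the order is diagonal,
exactly the two terms of these minors have the largest exponent. Arbitrary column choices `c` and
`c'` are connected through `c ⊓ c'` by changing one column at a time.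
-/

open scoped MonomialOrder

section ShiftCriterion

variable {σ R : Type*} [CommRing R] {mo : MonomialOrder σ} {G : Set (MvPolynomial σ R)}

/-- The monomial multiple of `p` with leading exponent `u`. It has this meaning only if
`mo.degree p ≤ u`, since the subtraction of exponents is truncated. -/
noncomputable def shiftTo (mo : MonomialOrder σ) (u : σ →₀ ℕ) (p : MvPolynomial σ R) :
    MvPolynomial σ R :=
  monomial (u - mo.degree p) 1 * p

/-- The span, over the coefficient ring, of the monomial multiples of elements of `G` with leading
exponent smaller than `u`. -/
noncomputable def lowerSpan (mo : MonomialOrder σ) (G : Set (MvPolynomial σ R)) (u : σ →₀ ℕ) :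
    Submodule R (MvPolynomial σ R) :=
  Submodule.span R {q | ∃ v, v ≺[mo] u ∧ ∃ p ∈ G, mo.degree p ≤ v ∧ q = shiftTo mo v p}

lemma shiftTo_add_degree (w : σ →₀ ℕ) (p : MvPolynomial σ R) :
    shiftTo mo (w + mo.degree p) p = monomial w 1 * p := by
  rw [shiftTo, add_tsub_cancel_right]

lemma leadingCoeff_shiftTo (u : σ →₀ ℕ) (p : MvPolynomial σ R) :
    mo.leadingCoeff (shiftTo mo u p) = mo.leadingCoeff p := by
  rw [shiftTo, mo.leadingCoeff_mul_of_left_mem_nonZeroDivisors (by simp), mo.leadingCoeff_monomial,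
    one_mul]

lemma shiftTo_ne_zero {p : MvPolynomial σ R} (hp : p ≠ 0) (u : σ →₀ ℕ) : shiftTo mo u p ≠ 0 := by
  rwa [← mo.leadingCoeff_ne_zero_iff, leadingCoeff_shiftTo, mo.leadingCoeff_ne_zero_iff]

lemma degree_shiftTo {p : MvPolynomial σ R} (hp : p ≠ 0) {u : σ →₀ ℕ} (hu : mo.degree p ≤ u) :
    mo.degree (shiftTo mo u p) = u := by
  classical
  have : Nontrivial R := nontrivial_of_ne _ _ (mo.leadingCoeff_ne_zero_iff.2 hp)
  rw [shiftTo, mo.degree_mul_of_left_mem_nonZeroDivisors (by simp) hp, mo.degree_monomial,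
    if_neg one_ne_zero, tsub_add_cancel_of_le hu]

lemma monomial_mul_mem_lowerSpan {p : MvPolynomial σ R} (hp : p ∈ G) {w u : σ →₀ ℕ}
    (hw : w + mo.degree p ≺[mo] u) : monomial w 1 * p ∈ lowerSpan mo G u :=
  Submodule.subset_span ⟨_, hw, p, hp, le_add_self, (shiftTo_add_degree w p).symm⟩

lemma restrictScalars_span_le_of_shiftTo_mem {V : Submodule R (MvPolynomial σ R)}
    (hV : ∀ u, ∀ p ∈ G, mo.degree p ≤ u → shiftTo mo u p ∈ V) :
    (Ideal.span G).restrictScalars R ≤ V := by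
  have hmonomials : Submodule.span R (Set.range fun w ↦ monomial w (1 : R)) =
      (⊤ : Submodule R (MvPolynomial σ R)) := by
    simpa only [coe_basisMonomials] using (basisMonomials σ R).span_eq
  rw [Ideal.span, ← Submodule.span_smul_of_span_eq_top hmonomials, Submodule.span_le]
  rintro _ ⟨_, ⟨w, rfl⟩, p, hp, rfl⟩
  have hmem := hV (w + mo.degree p) p hp le_add_self
  rwa [shiftTo_add_degree] at hmem

lemma restrictScalars_span_le_of_lowerSpan_le {V : Submodule R (MvPolynomial σ R)}
    (hV : ∀ u, lowerSpan mo G u ≤ V → ∀ p ∈ G, mo.degree p ≤ u → shiftTo mo u p ∈ V) :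
    (Ideal.span G).restrictScalars R ≤ V := by
  refine restrictScalars_span_le_of_shiftTo_mem (mo := mo) fun u ↦ ?_
  induction u using (InvImage.wf mo.toSyn wellFounded_lt).induction with
  | _ u ih =>
    refine hV u (Submodule.span_le.2 ?_)
    rintro _ ⟨v, hvu, p, hp, hpv, rfl⟩
    exact ih v hvu p hp hpv

theorem exists_degree_eq_of_mem_span_range [NoZeroDivisors R] {ι : Type*}
    {L : ι → MvPolynomial σ R} (hL : ∀ i, L i ≠ 0)
    (hinj : Function.Injective fun i ↦ mo.degree (L i)) {f : MvPolynomial σ R}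
    (hf : f ∈ Submodule.span R (Set.range L)) (hf0 : f ≠ 0) :
    ∃ i, mo.degree (L i) = mo.degree f := by
  obtain ⟨a, rfl⟩ := Finsupp.mem_span_range_iff_exists_finsupp.1 hf
  have ha : a.support.Nonempty := by
    rw [Finsupp.support_nonempty_iff]
    rintro rfl
    exact hf0 Finsupp.sum_zero_index
  obtain ⟨i, hi, hmax⟩ := a.support.exists_max_image (fun i ↦ mo.toSyn (mo.degree (L i))) ha
  have hcoeff : coeff (mo.degree (L i)) (a.sum fun j r ↦ r • L j) =
      a i * mo.leadingCoeff (L i) := by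
    rw [Finsupp.sum, coeff_sum, Finset.sum_eq_single_of_mem i hi]
    · rw [coeff_smul, smul_eq_mul, MonomialOrder.leadingCoeff]
    · intro j hj hji
      have hlt : mo.degree (L j) ≺[mo] mo.degree (L i) :=
        (hmax j hj).lt_of_ne fun h ↦ hji (hinj (mo.toSyn.injective h))
      rw [coeff_smul, mo.coeff_eq_zero_of_lt hlt, smul_zero]
  refine ⟨i, mo.toSyn.injective (le_antisymm (mo.le_degree ?_) ?_)⟩
  · rw [mem_support_iff, hcoeff]
    exact mul_ne_zero (Finsupp.mem_support_iff.1 hi) (mo.leadingCoeff_ne_zero_iff.2 (hL i))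
  · exact mo.degree_sum_le.trans (Finset.sup_le fun j hj ↦ mo.degree_smul_le.trans (hmax j hj))

theorem exists_degree_le_of_shiftTo_sModEq [NoZeroDivisors R] (hG0 : 0 ∉ G)
    (hG : ∀ u, ∀ p ∈ G, ∀ q ∈ G, mo.degree p ≤ u → mo.degree q ≤ u →
      shiftTo mo u p ≡ shiftTo mo u q [SMOD lowerSpan mo G u])
    {f : MvPolynomial σ R} (hf : f ∈ Ideal.span G) (hf0 : f ≠ 0) :
    ∃ p ∈ G, mo.degree p ≤ mo.degree f := by
  choose p hpG hpu using fun u : {u // ∃ p ∈ G, mo.degree p ≤ u} ↦ u.2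
  let L := fun u ↦ shiftTo mo u.1 (p u)
  have hp0 (u) : p u ≠ 0 := ne_of_mem_of_not_mem (hpG u) hG0
  have hL (u) : mo.degree (L u) = u := degree_shiftTo (hp0 u) (hpu u)
  have hspan : (Ideal.span G).restrictScalars R ≤ Submodule.span R (Set.range L) := by
    refine restrictScalars_span_le_of_lowerSpan_le (mo := mo) fun u hlower q hq hqu ↦ ?_
    let v : {u // ∃ p ∈ G, mo.degree p ≤ u} := ⟨u, q, hq, hqu⟩
    have hsub : shiftTo mo u q - L v ∈ Submodule.span R (Set.range L) :=
      hlower (SModEq.sub_mem.1 (hG u q hq (p v) (hpG v) hqu (hpu v)))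
    exact (Submodule.sub_mem_iff_left _ (Submodule.subset_span (Set.mem_range_self v))).1 hsub
  have hinj : Function.Injective fun u ↦ mo.degree (L u) := by
    simpa only [hL] using Subtype.val_injective
  obtain ⟨u, hu⟩ := exists_degree_eq_of_mem_span_range
    (fun u ↦ shiftTo_ne_zero (hp0 u) u) hinj (hspan hf) hf0
  rw [← hu, hL]
  exact u.2

end ShiftCriterion

section GroebnerBasis

variable {σ : Type*} {mo : MonomialOrder σ} {J : Ideal (MvPolynomial σ K)}
  {G : Set (MvPolynomial σ K)}

lemma leadExp_eq_degree (p : MvPolynomial σ K) : leadExp mo p = mo.degree p := rfl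

lemma isGroebnerBasis_of_exists_degree_le (hGJ : G ⊆ J) (hG0 : 0 ∉ G)
    (hdeg : ∀ f ∈ J, f ≠ 0 → ∃ p ∈ G, mo.degree p ≤ mo.degree f) : IsGroebnerBasis mo J G := by
  refine ⟨hGJ, le_antisymm (Ideal.span_mono (Set.image_mono ?_)) (Ideal.span_le.2 ?_)⟩
  · exact fun p hp ↦ ⟨hGJ hp.1, hp.2⟩
  rintro _ ⟨f, ⟨hf, hf0⟩, rfl⟩
  obtain ⟨p, hp, hpf⟩ := hdeg f hf hf0
  exact Ideal.mem_of_dvd _ (monomial_dvd_monomial.2 ⟨Or.inr hpf, one_dvd 1⟩)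
    (Ideal.subset_span ⟨p, ⟨hp, ne_of_mem_of_not_mem hp hG0⟩, rfl⟩)

end GroebnerBasis

section AlternatingSum

lemma sModEq_of_alternating_sum_eq_zero {R M : Type*} [Ring R] [AddCommGroup M] [Module R M]
    {N : Submodule R M} {k : ℕ} {g : Fin (k + 1) → M} (i : Fin k)
    (hsum : ∑ j : Fin (k + 1), (-1 : R) ^ (j : ℕ) • g j = 0)
    (hg : ∀ j, j ≠ i.castSucc → j ≠ i.succ → g j ∈ N) :
    g i.castSucc ≡ g i.succ [SMOD N] := by
  have hquot : ∑ j : Fin (k + 1), (-1 : R) ^ (j : ℕ) • N.mkQ (g j) = 0 := by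
    simpa only [map_sum, map_smul, map_zero] using congrArg N.mkQ hsum
  rw [Fintype.sum_eq_add i.castSucc i.succ i.castSucc_lt_succ.ne] at hquot
  · rw [Fin.val_castSucc, Fin.val_succ, pow_succ, mul_neg_one, neg_smul, add_neg_eq_zero] at hquot
    exact (isUnit_neg_one.pow i).smul_left_cancel.1 hquot
  · rintro j ⟨hcast, hsucc⟩
    rw [Submodule.mkQ_apply, (Submodule.Quotient.mk_eq_zero N).2 (hg j hcast hsucc), smul_zero]

end AlternatingSum

section DiagonalExponent

variable {m n : ℕ}

/-- The exponent of the monomial `∏ i, x_{i, c i}`, the main diagonal of the submatrix with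
columns `c`. -/
noncomputable def diagExp (c : Fin m → Fin n) : Fin m × Fin n →₀ ℕ :=
  ∑ i, Finsupp.single (i, c i) 1

lemma diagExp_apply (c : Fin m → Fin n) (i : Fin m) (j : Fin n) :
    diagExp c (i, j) = if c i = j then 1 else 0 := by
  rw [diagExp, Finsupp.finsetSum_apply, Finset.sum_eq_single_of_mem i (Finset.mem_univ i)]
  · simp [Finsupp.single_apply]
  · intro k _ hk
    simp [hk]

lemma diagExp_le_iff {c : Fin m → Fin n} {u : Fin m × Fin n →₀ ℕ} :
    diagExp c ≤ u ↔ ∀ i, u (i, c i) ≠ 0 := by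
  simp only [Finsupp.le_def, Prod.forall, diagExp_apply]
  grind

lemma monomial_diagExp (R : Type*) [CommSemiring R] (c : Fin m → Fin n) :
    monomial (diagExp c) (1 : R) = ∏ i, X (i, c i) :=
  monomial_sum_one _ _

lemma diagExp_add_single {c c' : Fin m → Fin n} {i : Fin m} (h : ∀ j ≠ i, c j = c' j) :
    diagExp c + Finsupp.single (i, c' i) 1 = diagExp c' + Finsupp.single (i, c i) 1 := by
  have hrest : ∑ j ∈ Finset.univ.erase i, Finsupp.single (j, c j) 1 =
      ∑ j ∈ Finset.univ.erase i, Finsupp.single (j, c' j) 1 :=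
    Finset.sum_congr rfl fun j hj ↦ by rw [h j (Finset.ne_of_mem_erase hj)]
  rw [diagExp, diagExp, ← Finset.add_sum_erase _ _ (Finset.mem_univ i), hrest,
    ← Finset.add_sum_erase _ (fun j ↦ Finsupp.single (j, c' j) 1) (Finset.mem_univ i)]
  abel

lemma single_add_diagExp_le {c c' : Fin m → Fin n} {i : Fin m} {u : Fin m × Fin n →₀ ℕ}
    (hi : c i ≠ c' i) (hu : diagExp c ≤ u) (hu' : diagExp c' ≤ u) :
    Finsupp.single (i, c i) 1 + diagExp c' ≤ u := by
  rw [diagExp_le_iff] at hu hu'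
  rintro ⟨r, j⟩
  rw [Finsupp.add_apply, diagExp_apply, Finsupp.single_apply]
  grind

end DiagonalExponent

section Exchange

variable {m n : ℕ} {mo : MonomialOrder (Fin m × Fin n)}

lemma single_add_diagExp_lt_iff {c c' : Fin m → Fin n} {j : Fin m} (hc : ∀ r ≠ j, c r = c' r)
    (i : Fin m) :
    Finsupp.single (i, c' j) 1 + diagExp c ≺[mo] Finsupp.single (i, c j) 1 + diagExp c' ↔
      Finsupp.single (i, c' j) 1 + Finsupp.single (j, c j) 1 ≺[mo]
        Finsupp.single (i, c j) 1 + Finsupp.single (j, c' j) 1 := by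
  rw [← add_lt_add_iff_right (mo.toSyn (Finsupp.single (j, c' j) 1)), ← map_add, ← map_add,
    add_assoc, diagExp_add_single hc, add_left_comm, add_assoc, add_left_comm _ (diagExp c'),
    map_add, map_add _ (diagExp c'), add_lt_add_iff_left]

namespace IsDiagonalOrder

lemma single_add_single_lt (hmo : IsDiagonalOrder K m n mo) {r r' : Fin m} {a b : Fin n}
    (hr : r < r') (hab : a < b) :
    Finsupp.single (r, b) 1 + Finsupp.single (r', a) 1 ≺[mo]
      Finsupp.single (r, a) 1 + Finsupp.single (r', b) 1 := by
  set offDiag : Fin m × Fin n →₀ ℕ := Finsupp.single (r, b) 1 + Finsupp.single (r', a) 1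
  set diag : Fin m × Fin n →₀ ℕ := Finsupp.single (r, a) 1 + Finsupp.single (r', b) 1
  have hne : offDiag ≠ diag := by
    intro h
    have := DFunLike.congr_fun h (r, b)
    simp [offDiag, diag, hab.ne, hr.ne'] at this
  have hdegree : mo.degree (monomial diag (1 : K) - monomial offDiag 1) = diag := by
    have := hmo 2 ![r, r'] ![a, b] (by simpa using hr) (by simpa using hab)
    simpa [Matrix.det_fin_two, X, monomial_mul, leadExp_eq_degree] using this
  refine lt_of_le_of_ne ?_ (mo.toSyn.injective.ne hne)
  rw [← hdegree]
  apply mo.le_degree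
  simp [hne.symm]

lemma single_add_diagExp_lt_of_lt (hmo : IsDiagonalOrder K m n mo) {c c' : Fin m → Fin n}
    {i j : Fin m} (hc : ∀ r ≠ j, c r = c' r) (hcol : c j < c' j) (hrow : i < j) :
    Finsupp.single (i, c' j) 1 + diagExp c ≺[mo] Finsupp.single (i, c j) 1 + diagExp c' :=
  (single_add_diagExp_lt_iff hc i).2 (hmo.single_add_single_lt hrow hcol)

lemma single_add_diagExp_lt_of_gt (hmo : IsDiagonalOrder K m n mo) {c c' : Fin m → Fin n}
    {i j : Fin m} (hc : ∀ r ≠ j, c r = c' r) (hcol : c j < c' j) (hrow : j < i) :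
    Finsupp.single (i, c j) 1 + diagExp c' ≺[mo] Finsupp.single (i, c' j) 1 + diagExp c := by
  rw [single_add_diagExp_lt_iff fun r hr ↦ (hc r hr).symm, add_comm,
    add_comm (Finsupp.single (i, c' j) 1)]
  exact hmo.single_add_single_lt hrow hcol

end IsDiagonalOrder

end Exchange

section LaplaceRelation

variable {m n : ℕ} {mo : MonomialOrder (Fin m × Fin n)}

/-- The determinant of the columns `c` of the generic `m × n` matrix. -/
noncomputable def maximalMinor (R : Type*) [CommRing R] (c : Fin m → Fin n) :
    MvPolynomial (Fin m × Fin n) R :=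
  Matrix.det (Matrix.of fun i j ↦ X (i, c j))

/-- The diagonal exponent of the `k`-th term `x_{i, e k} * maximalMinor (e ∘ k.succAbove)` of the
Laplace relation `laplace_relation i e`. -/
noncomputable def laplaceExp (i : Fin m) (e : Fin (m + 1) → Fin n) (k : Fin (m + 1)) :
    Fin m × Fin n →₀ ℕ :=
  Finsupp.single (i, e k) 1 + diagExp (e ∘ k.succAbove)

lemma maximalMinor_ne_zero (R : Type*) [CommRing R] [Nontrivial R] {c : Fin m → Fin n}
    (hc : Function.Injective c) : maximalMinor R c ≠ 0 := by
  have hrename : maximalMinor R c =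
      rename (Prod.map id c) (Matrix.mvPolynomialX (Fin m) (Fin m) R).det := by
    rw [AlgHom.map_det, maximalMinor]
    congr 1
    ext1 i j
    simp
  rw [hrename, Ne, rename_eq_zero_iff_of_injective _ (Function.injective_id.prodMap hc)]
  exact Matrix.det_mvPolynomialX_ne_zero (Fin m) R

lemma laplace_relation (R : Type*) [CommRing R] (i : Fin m) (e : Fin (m + 1) → Fin n) :
    ∑ k : Fin (m + 1), (-1) ^ (k : ℕ) * X (i, e k) * maximalMinor R (e ∘ k.succAbove) = 0 := by
  let M : Matrix (Fin (m + 1)) (Fin (m + 1)) (MvPolynomial (Fin m × Fin n) R) :=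
    Matrix.of (Fin.cons (fun k ↦ X (i, e k)) fun r k ↦ X (r, e k))
  have hM : M.det = 0 := Matrix.det_zero_of_row_eq (Fin.succ_ne_zero i).symm rfl
  rwa [Matrix.det_succ_row_zero] at hM

lemma succAbove_castSucc_eq_succAbove_succ {i r : Fin m} (hr : r ≠ i) :
    i.castSucc.succAbove r = i.succ.succAbove r := by
  rcases hr.lt_or_gt with h | h
  · rw [Fin.succAbove_castSucc_of_lt i r h, Fin.succAbove_succ_of_le i r h.le]
  · rw [Fin.succAbove_castSucc_of_le i r h.le, Fin.succAbove_succ_of_lt i r h]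

lemma laplaceExp_succ_self (i : Fin m) (e : Fin (m + 1) → Fin n) :
    laplaceExp i e i.succ = laplaceExp i e i.castSucc := by
  have := diagExp_add_single (c := e ∘ i.castSucc.succAbove) (c' := e ∘ i.succ.succAbove) (i := i)
    fun r hr ↦ congrArg e (succAbove_castSucc_eq_succAbove_succ hr)
  simpa [laplaceExp, add_comm] using this.symm

namespace IsDiagonalOrder

lemma degree_maximalMinor (hmo : IsDiagonalOrder K m n mo) {c : Fin m → Fin n}
    (hc : StrictMono c) : mo.degree (maximalMinor K c) = diagExp c :=
  hmo m id c strictMono_id hc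

variable {e : Fin (m + 1) → Fin n} {i j : Fin m}

lemma laplaceExp_castSucc_lt_succ (hmo : IsDiagonalOrder K m n mo) (he : StrictMono e)
    (hj : j < i) : laplaceExp i e j.castSucc ≺[mo] laplaceExp i e j.succ := by
  have := hmo.single_add_diagExp_lt_of_gt (c := e ∘ j.succ.succAbove)
    (c' := e ∘ j.castSucc.succAbove)
    (fun r hr ↦ congrArg e (succAbove_castSucc_eq_succAbove_succ hr).symm)
    (by simpa using he j.castSucc_lt_succ) hj
  simpa [laplaceExp] using this

lemma laplaceExp_succ_lt_castSucc (hmo : IsDiagonalOrder K m n mo) (he : StrictMono e)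
    (hj : i < j) : laplaceExp i e j.succ ≺[mo] laplaceExp i e j.castSucc := by
  have := hmo.single_add_diagExp_lt_of_lt (c := e ∘ j.succ.succAbove)
    (c' := e ∘ j.castSucc.succAbove)
    (fun r hr ↦ congrArg e (succAbove_castSucc_eq_succAbove_succ hr).symm)
    (by simpa using he j.castSucc_lt_succ) hj
  simpa [laplaceExp] using this

lemma laplaceExp_lt_of_lt_castSucc (hmo : IsDiagonalOrder K m n mo) (he : StrictMono e)
    (k : Fin (m + 1)) (hk : k < i.castSucc) :
    laplaceExp i e k ≺[mo] laplaceExp i e i.castSucc := by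
  induction k using Fin.reverseInduction with
  | last => exact absurd hk (Fin.le_last _).not_gt
  | cast j ih =>
    have hstep := hmo.laplaceExp_castSucc_lt_succ he (Fin.castSucc_lt_castSucc_iff.1 hk)
    rcases (Fin.succ_le_castSucc_iff.2 (Fin.castSucc_lt_castSucc_iff.1 hk)).lt_or_eq with h | h
    · exact hstep.trans (ih h)
    · rwa [h] at hstep

lemma laplaceExp_lt_of_succ_lt (hmo : IsDiagonalOrder K m n mo) (he : StrictMono e)
    (k : Fin (m + 1)) (hk : i.succ < k) :
    laplaceExp i e k ≺[mo] laplaceExp i e i.succ := by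
  induction k using Fin.induction with
  | zero => exact absurd hk (Fin.zero_le _).not_gt
  | succ j ih =>
    have hstep := hmo.laplaceExp_succ_lt_castSucc he (Fin.succ_lt_succ_iff.1 hk)
    rcases (Fin.succ_le_castSucc_iff.2 (Fin.succ_lt_succ_iff.1 hk)).lt_or_eq with h | h
    · exact hstep.trans (ih h)
    · rwa [← h] at hstep

lemma laplaceExp_lt (hmo : IsDiagonalOrder K m n mo) (he : StrictMono e) {k : Fin (m + 1)}
    (hcast : k ≠ i.castSucc) (hsucc : k ≠ i.succ) :
    laplaceExp i e k ≺[mo] laplaceExp i e i.castSucc := by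
  rcases hcast.lt_or_gt with h | h
  · exact hmo.laplaceExp_lt_of_lt_castSucc he k h
  · rw [← laplaceExp_succ_self]
    exact hmo.laplaceExp_lt_of_succ_lt he k ((Fin.castSucc_lt_iff_succ_le.1 h).lt_of_ne hsucc.symm)

end IsDiagonalOrder

end LaplaceRelation

section ChangeColumns

variable {m n : ℕ} {mo : MonomialOrder (Fin m × Fin n)}

lemma exists_strictMono_merge {c c' : Fin m → Fin n} (hc : StrictMono c) (hc' : StrictMono c')
    {i : Fin m} (hi : c i < c' i) (hne : ∀ j ≠ i, c j = c' j) :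
    ∃ e : Fin (m + 1) → Fin n, StrictMono e ∧ e ∘ i.castSucc.succAbove = c' ∧
      e ∘ i.succ.succAbove = c := by
  refine ⟨i.castSucc.insertNth (c i) c', (Fin.strictMono_insertNth_iff ..).2 ⟨hc', ?_, ?_⟩, ?_, ?_⟩
  · intro r hr
    have hr : r < i := Fin.castSucc_lt_castSucc_iff.1 hr
    exact hne r hr.ne ▸ hc hr
  · exact fun r hr ↦ hi.trans_le (hc'.monotone (Fin.castSucc_le_castSucc_iff.1 hr))
  · funext r
    simp
  · funext r
    obtain rfl | hr := eq_or_ne r i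
    · simp
    · simp [← succAbove_castSucc_eq_succAbove_succ hr, hne r hr]

namespace IsDiagonalOrder

lemma shiftTo_sModEq_of_laplace (hmo : IsDiagonalOrder K m n mo) {e : Fin (m + 1) → Fin n}
    (he : StrictMono e) (i : Fin m) (w : Fin m × Fin n →₀ ℕ) :
    shiftTo mo (w + laplaceExp i e i.castSucc) (maximalMinor K (e ∘ i.castSucc.succAbove)) ≡
      shiftTo mo (w + laplaceExp i e i.castSucc) (maximalMinor K (e ∘ i.succ.succAbove))
      [SMOD lowerSpan mo (maximalMinors K m n) (w + laplaceExp i e i.castSucc)] := by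
  let g k := monomial (w + Finsupp.single (i, e k) 1) (1 : K) * maximalMinor K (e ∘ k.succAbove)
  have hmono (k : Fin (m + 1)) : StrictMono (e ∘ k.succAbove) :=
    he.comp (Fin.strictMono_succAbove k)
  have hg (k) : w + laplaceExp i e k =
      w + Finsupp.single (i, e k) 1 + mo.degree (maximalMinor K (e ∘ k.succAbove)) := by
    rw [hmo.degree_maximalMinor (hmono k), laplaceExp, add_assoc]
  have hshift (k) : shiftTo mo (w + laplaceExp i e k) (maximalMinor K (e ∘ k.succAbove)) = g k := by
    rw [hg, shiftTo_add_degree]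
  have hsum : ∑ k : Fin (m + 1), (-1 : K) ^ (k : ℕ) • g k = 0 := by
    rw [← mul_zero (monomial w (1 : K)), ← laplace_relation K i e, Finset.mul_sum]
    refine Finset.sum_congr rfl fun k _ ↦ ?_
    simp only [g, monomial_add_single, pow_one, smul_eq_C_mul, map_pow, map_neg, map_one]
    ring
  rw [hshift, ← laplaceExp_succ_self, hshift]
  refine sModEq_of_alternating_sum_eq_zero i hsum fun k hcast hsucc ↦ ?_
  have hmem : maximalMinor K (e ∘ k.succAbove) ∈ maximalMinors K m n := ⟨_, hmono k, rfl⟩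
  refine monomial_mul_mem_lowerSpan hmem ?_
  rw [← hg, laplaceExp_succ_self, map_add, map_add, add_lt_add_iff_left]
  exact hmo.laplaceExp_lt he hcast hsucc

variable {c c' : Fin m → Fin n} {u : Fin m × Fin n →₀ ℕ}

lemma shiftTo_sModEq_of_lt (hmo : IsDiagonalOrder K m n mo) (hc : StrictMono c)
    (hc' : StrictMono c') {i : Fin m} (hi : c i < c' i) (hne : ∀ j ≠ i, c j = c' j)
    (hu : diagExp c ≤ u) (hu' : diagExp c' ≤ u) :
    shiftTo mo u (maximalMinor K c') ≡ shiftTo mo u (maximalMinor K c)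
      [SMOD lowerSpan mo (maximalMinors K m n) u] := by
  obtain ⟨e, he, rfl, rfl⟩ := exists_strictMono_merge hc hc' hi hne
  have hle := single_add_diagExp_le hi.ne hu hu'
  rw [Function.comp_apply, Fin.succAbove_succ_self] at hle
  obtain ⟨w, rfl⟩ := le_iff_exists_add'.1 hle
  exact hmo.shiftTo_sModEq_of_laplace he i w

lemma shiftTo_sModEq_of_eq_off (hmo : IsDiagonalOrder K m n mo) (hc : StrictMono c)
    (hc' : StrictMono c') {i : Fin m} (hne : ∀ j ≠ i, c j = c' j)
    (hu : diagExp c ≤ u) (hu' : diagExp c' ≤ u) :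
    shiftTo mo u (maximalMinor K c) ≡ shiftTo mo u (maximalMinor K c')
      [SMOD lowerSpan mo (maximalMinors K m n) u] := by
  rcases lt_trichotomy (c i) (c' i) with hi | hi | hi
  · exact (hmo.shiftTo_sModEq_of_lt hc hc' hi hne hu hu').symm
  · rw [show c = c' from funext fun j ↦ by by_cases h : j = i <;> grind]
    exact SModEq.rfl
  · exact hmo.shiftTo_sModEq_of_lt hc' hc hi (fun j hj ↦ (hne j hj).symm) hu' hu

lemma shiftTo_sModEq_of_le (hmo : IsDiagonalOrder K m n mo) (hc : StrictMono c)
    (hc' : StrictMono c') (hle : c' ≤ c) (hu : diagExp c ≤ u) (hu' : diagExp c' ≤ u) :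
    shiftTo mo u (maximalMinor K c) ≡ shiftTo mo u (maximalMinor K c')
      [SMOD lowerSpan mo (maximalMinors K m n) u] := by
  let path (k : Fin (m + 1)) (j : Fin m) : Fin n := if j.castSucc < k then c' j else c j
  have hpath (k) : StrictMono (path k) := by
    intro a b hab
    have := hc hab
    have := hc' hab
    have := hle a
    grind
  have hpath_le (k) : diagExp (path k) ≤ u := by
    rw [diagExp_le_iff] at hu hu' ⊢
    grind
  have hpath_sModEq (k) : shiftTo mo u (maximalMinor K c) ≡ shiftTo mo u (maximalMinor K (path k))
      [SMOD lowerSpan mo (maximalMinors K m n) u] := by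
    induction k using Fin.induction with
    | zero => simp [path]
    | succ i ih =>
      refine ih.trans (hmo.shiftTo_sModEq_of_eq_off (hpath _) (hpath _) (i := i) ?_
        (hpath_le _) (hpath_le _))
      intro j hj
      simp only [path, Fin.castSucc_lt_castSucc_iff, Fin.castSucc_lt_succ_iff, hj.le_iff_lt]
  simpa [path, Fin.castSucc_lt_last] using hpath_sModEq (Fin.last m)

lemma shiftTo_sModEq (hmo : IsDiagonalOrder K m n mo) (hc : StrictMono c) (hc' : StrictMono c')
    (hu : diagExp c ≤ u) (hu' : diagExp c' ≤ u) :
    shiftTo mo u (maximalMinor K c) ≡ shiftTo mo u (maximalMinor K c')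
      [SMOD lowerSpan mo (maximalMinors K m n) u] := by
  have hinf : StrictMono (c ⊓ c') := fun a b hab ↦ min_lt_min (hc hab) (hc' hab)
  have hinf_le : diagExp (c ⊓ c') ≤ u := by
    rw [diagExp_le_iff] at hu hu' ⊢
    intro i
    rcases min_choice (c i) (c' i) with h | h
    · simpa [h] using hu i
    · simpa [h] using hu' i
  exact (hmo.shiftTo_sModEq_of_le hc hinf inf_le_left hu hinf_le).trans
    (hmo.shiftTo_sModEq_of_le hc' hinf inf_le_right hu' hinf_le).symm

end IsDiagonalOrder

end ChangeColumns

section MaximalMinors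

variable {m n : ℕ} {mo : MonomialOrder (Fin m × Fin n)}

lemma zero_notMem_maximalMinors : 0 ∉ maximalMinors K m n := by
  rintro ⟨c, hc, h⟩
  exact maximalMinor_ne_zero K hc.injective h.symm

namespace IsDiagonalOrder

theorem isGroebnerBasis_maximalMinors (hmo : IsDiagonalOrder K m n mo) :
    IsGroebnerBasis mo (Ideal.span (maximalMinors K m n)) (maximalMinors K m n) := by
  refine isGroebnerBasis_of_exists_degree_le Ideal.subset_span zero_notMem_maximalMinors
    fun f ↦ exists_degree_le_of_shiftTo_sModEq zero_notMem_maximalMinors ?_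
  rintro u _ ⟨c, hc, rfl⟩ _ ⟨c', hc', rfl⟩ hu hu'
  exact hmo.shiftTo_sModEq hc hc' (hmo.degree_maximalMinor hc ▸ hu)
    (hmo.degree_maximalMinor hc' ▸ hu')

lemma image_monomial_leadExp_maximalMinors (hmo : IsDiagonalOrder K m n mo) :
    (fun p ↦ monomial (leadExp mo p) (1 : K)) '' {p | p ∈ maximalMinors K m n ∧ p ≠ 0} =
      {q | ∃ c : Fin m → Fin n, StrictMono c ∧ q = ∏ i, X (i, c i)} := by
  have hlead {c : Fin m → Fin n} (hc : StrictMono c) :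
      monomial (leadExp mo (maximalMinor K c)) (1 : K) = ∏ i, X (i, c i) := by
    rw [leadExp_eq_degree, hmo.degree_maximalMinor hc, monomial_diagExp]
  ext q
  constructor
  · rintro ⟨_, ⟨⟨c, hc, rfl⟩, -⟩, rfl⟩
    exact ⟨c, hc, hlead hc⟩
  · rintro ⟨c, hc, rfl⟩
    exact ⟨maximalMinor K c, ⟨⟨c, hc, rfl⟩, maximalMinor_ne_zero K hc.injective⟩, hlead hc⟩

end IsDiagonalOrder

end MaximalMinors

/-- The maximal minors of a generic `m × n` matrix (`m ≤ n`) are a Gröbner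
basis of the ideal they generate with respect to any diagonal term order; in particular, the
initial ideal is generated by the squarefree monomials `x_{1,j_1} x_{2,j_2} ⋯ x_{m,j_m}`
with `j_1 < j_2 < ⋯ < j_m`. -/
theorem maximalMinors_groebner (m n : ℕ) (hmn : m ≤ n)
    (mo : MonomialOrder (Fin m × Fin n)) (hdiag : IsDiagonalOrder K m n mo) :
    IsGroebnerBasis mo (Ideal.span (maximalMinors K m n)) (maximalMinors K m n) ∧
    initialIdeal mo (Ideal.span (maximalMinors K m n)) =
      Ideal.span {q : MvPolynomial (Fin m × Fin n) K | ∃ c : Fin m → Fin n, StrictMono c ∧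
        q = ∏ i : Fin m, MvPolynomial.X (i, c i)} := by
  have hbasis := hdiag.isGroebnerBasis_maximalMinors
  exact ⟨hbasis, by rw [← hbasis.2, hdiag.image_monomial_leadExp_maximalMinors]⟩
end

section
/- Let X be an m×n matrix of indeterminates (m ≤ n), L the variables of a one-sided ladder L of X with distinguished points (a_1,b_1),...,(a_s,b_s), sizes t = (t_1,...,t_s), and let I_t(L) = I_{t_1}(L_1) + ... + I_{t_s}(L_s) ⊂ K[X] be the mixed ladder determinantal ideal. Then I_t(L) is a prime ideal and K[X]/I_t(L) is Cohen-Macaulay. -/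
open MvPolynomial

variable {K : Type*} [Field K]

/-- The region `L_i = {(x,y) : 1 ≤ x ≤ a_i, b_i ≤ y ≤ n}` of the `m × n` grid determined by a
distinguished point `(a_i, b_i)` (matrix coordinates are 1-based). -/
def ladderRegion (a b : ℕ → ℕ) (n : ℕ) (i : ℕ) : Set (ℕ × ℕ) :=
  {p | 1 ≤ p.1 ∧ p.1 ≤ a i ∧ b i ≤ p.2 ∧ p.2 ≤ n}

/-- The mixed ladder determinantal ideal `I_t(L) = I_{t_1}(L_1) + ⋯ + I_{t_s}(L_s)` in the
polynomial ring on the variables indexed by `V`: for each `i`, one takes the `t_i × t_i`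
minors of the generic matrix whose entries lie in the region `L_i`. -/
noncomputable def mixedLadderIdeal (K : Type*) [Field K] (V : Set (ℕ × ℕ))
    (a b t : ℕ → ℕ) (n s : ℕ) : Ideal (MvPolynomial V K) :=
  ⨆ i ∈ Set.Icc 1 s, Ideal.span
    {p | ∃ r c : Fin (t i) → ℕ, StrictMono r ∧ StrictMono c ∧
      ∃ h : ∀ x y : Fin (t i), (r x, c y) ∈ ladderRegion a b n i ∧ (r x, c y) ∈ V,
      p = Matrix.det (Matrix.of fun x y => (MvPolynomial.X ⟨(r x, c y), (h x y).2⟩ :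
        MvPolynomial V K))}

set_option synthInstance.maxHeartbeats 1000000 in
/-- `R/I` is Cohen-Macaulay: there is a regular sequence on `R/I`, consisting of elements of
the irrelevant maximal ideal, whose length equals the Krull dimension of `R/I`. -/
def QuotientIsCohenMacaulay {σ : Type*} (I : Ideal (MvPolynomial σ K)) : Prop :=
  ∃ rs : List (MvPolynomial σ K ⧸ I),
    (∀ x ∈ rs, x ∈ (Ideal.span (Set.range (MvPolynomial.X : σ → MvPolynomial σ K))).map
      (Ideal.Quotient.mk I)) ∧
    RingTheory.Sequence.IsRegular (MvPolynomial σ K ⧸ I) rs ∧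
    (rs.length : WithBot ℕ∞) = ringKrullDim (MvPolynomial σ K ⧸ I)

/-!
After reversing the columns, the `t_i`-minors of the ladder region `L_i` are the `(k + 1)`-minors of
a top left block of the generic matrix with `p + k` rows and `q + k` columns, where `k + 1 = t_i`.
These conditions `(p, q, k)` form a chain for a natural order, and along such chains the codimension
is the number of cells in the union of the `p × q` rectangles.

Induct on this number, and on the ranks. Take the condition `(p + 1, q + 1, k)` whose block has the
most rows, let `x` be the last variable of its block, and compare the ideal `I` with two ideals of
simpler chains:
* `N`, where the block is replaced by its two subblocks without the last row, respectively column;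
* `C`, where the rank is lowered to `(p + 1, q + 1, k - 1)` (the unit ideal if `k = 0`).

Then `I` is generated over `N` by the minors `f_i = x g_i + h_i` through the corner `x`, where the
`g_i` are the `k`-minors that generate `C` over `N`, and neither `N`, `g_i` nor `h_i` involves `x`.
Modulo `N` all the fractions `h_i / g_i` agree.

Primality: `I` consists of the polynomials in `x` that vanish at `-h_0 / g_0` in the fraction field
modulo `N`, because `h_0` is a nonzerodivisor modulo `C`.

Depth: `f_0 C = g_0 I` modulo `N`, so `C / N ≅ I / N`, and the long exact `Ext` sequences pass the
depth from `N` and `C` to `I`.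
-/

universe u

section ExtVanishing

open CategoryTheory Abelian Limits
open scoped Pointwise

variable {R : Type u} [CommRing R] {k : ModuleCat.{u} R} {d : ℕ}
variable {M M₁ M₂ M₃ : Type u} [AddCommGroup M] [Module R M] [AddCommGroup M₁] [Module R M₁]
  [AddCommGroup M₂] [Module R M₂] [AddCommGroup M₃] [Module R M₃]

/-- `Ext^i(k, M) = 0` for all `i < d`. For `k = R ⧸ m` and `M` finite over a Noetherian ring with
`m M ≠ M` this says that the `m`-depth of `M` is at least `d` (Rees). -/
def ExtVanishesBelow (k : ModuleCat.{u} R) (M : Type u) [AddCommGroup M] [Module R M]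
    (d : ℕ) : Prop :=
  ∀ i < d, Subsingleton (Ext k (ModuleCat.of R M) i)

theorem shortExact_shortComplexOfCompEqZero {f : M₁ →ₗ[R] M₂} {g : M₂ →ₗ[R] M₃}
    (hf : Function.Injective f) (hg : Function.Surjective g) (hfg : Function.Exact f g) :
    (ModuleCat.shortComplexOfCompEqZero f g hfg.linearMap_comp_eq_zero).ShortExact where
  exact := ModuleCat.shortComplex_exact _ hfg
  mono_f := (ModuleCat.mono_iff_injective _).2 hf
  epi_g := (ModuleCat.epi_iff_surjective _).2 hg

namespace ExtVanishesBelow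

theorem of_linearEquiv (e : M₁ ≃ₗ[R] M₂) (h : ExtVanishesBelow k M₁ d) :
    ExtVanishesBelow k M₂ d := fun i hi ↦
  have : Subsingleton ((extFunctorObj k i).obj (ModuleCat.of R M₁)) := h i hi
  (((extFunctorObj k i).mapIso e.toModuleIso).addCommGroupIsoToAddEquiv).symm.injective.subsingleton

theorem of_subsingleton [Subsingleton M] : ExtVanishesBelow k M d := by
  intro i _
  have hM : IsZero (ModuleCat.of R M) := ModuleCat.isZero_of_subsingleton _
  exact AddCommGrpCat.subsingleton_of_isZero ((extFunctorObj k i).map_isZero hM)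

theorem submodule {N : Submodule R M} (hM : ExtVanishesBelow k M (d + 1))
    (hMN : ExtVanishesBelow k (M ⧸ N) d) : ExtVanishesBelow k N (d + 1) := by
  have exact := shortExact_shortComplexOfCompEqZero N.injective_subtype N.mkQ_surjective
    (LinearMap.exact_subtype_mkQ N)
  rintro (_ | i) hi
  · have := exact.mono_f
    have : Subsingleton (Ext k (ModuleCat.of R M) 0) := hM 0 hi
    exact (Ext.postcomp_mk₀_injective_of_mono k
      (ModuleCat.shortComplexOfCompEqZero N.subtype N.mkQ _).f).subsingleton
  · have hi₂ := AddCommGrpCat.isZero_of_iff_subsingleton.mpr (hM (i + 1) hi)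
    have hi₃ := AddCommGrpCat.isZero_of_iff_subsingleton.mpr (hMN i (by omega))
    exact AddCommGrpCat.subsingleton_of_isZero <| ShortComplex.Exact.isZero_of_both_zeros
      (Ext.covariant_sequence_exact₁' k exact i (i + 1) rfl)
      (hi₃.eq_zero_of_src _) (hi₂.eq_zero_of_tgt _)

theorem quotient {N : Submodule R M} (hN : ExtVanishesBelow k N (d + 1))
    (hM : ExtVanishesBelow k M (d + 1)) : ExtVanishesBelow k (M ⧸ N) d := by
  have exact := shortExact_shortComplexOfCompEqZero N.injective_subtype N.mkQ_surjective
    (LinearMap.exact_subtype_mkQ N)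
  intro i hi
  have hi₁ := AddCommGrpCat.isZero_of_iff_subsingleton.mpr (hN (i + 1) (by omega))
  have hi₂ := AddCommGrpCat.isZero_of_iff_subsingleton.mpr (hM i (by omega))
  exact AddCommGrpCat.subsingleton_of_isZero <| ShortComplex.Exact.isZero_of_both_zeros
    (Ext.covariant_sequence_exact₃' k exact i (i + 1) rfl)
    (hi₂.eq_zero_of_src _) (hi₁.eq_zero_of_tgt _)

end ExtVanishesBelow

theorem nonempty_linearEquiv_of_smul_eq_smul {f g : R} {C I : Submodule R M}
    (hf : IsSMulRegular M f) (hg : IsSMulRegular M g) (h : f • C = g • I) :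
    Nonempty (C ≃ₗ[R] I) :=
  ⟨(Submodule.equivMapOfInjective (LinearMap.lsmul R M f) hf C).trans <|
    (LinearEquiv.ofEq _ _ h).trans
      (Submodule.equivMapOfInjective (LinearMap.lsmul R M g) hg I).symm⟩

namespace ExtVanishesBelow

/-- `C ≅ I`, so both `0 → C → M → M/C → 0` and `0 → I → M → M/I → 0` compute the same `Ext`. -/
theorem quotient_of_smul_eq_smul {f g : R} {C I : Submodule R M} (hf : IsSMulRegular M f)
    (hg : IsSMulRegular M g) (h : f • C = g • I) (hM : ExtVanishesBelow k M (d + 1))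
    (hC : ExtVanishesBelow k (M ⧸ C) d) : ExtVanishesBelow k (M ⧸ I) d := by
  obtain ⟨e⟩ := nonempty_linearEquiv_of_smul_eq_smul hf hg h
  exact ((hM.submodule hC).of_linearEquiv e).quotient hM

theorem quotient_of_smul_sup_eq_smul_sup {N C I : Ideal R} [hN : N.IsPrime] (hNC : N ≤ C)
    (hNI : N ≤ I) {f g : R} (hf : f ∉ N) (hg : g ∉ N) (h : f • C ⊔ N = g • I ⊔ N)
    (hextN : ExtVanishesBelow k (R ⧸ N) (d + 1)) (hextC : ExtVanishesBelow k (R ⧸ C) d) :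
    ExtVanishesBelow k (R ⧸ I) d := by
  have regular {x : R} (hx : x ∉ N) : IsSMulRegular (R ⧸ N) x :=
    (isSMulRegular_quotient_iff_mem_of_smul_mem ..).2
      fun z hz ↦ (hN.mem_or_mem hz).resolve_left hx
  have h' : f • Submodule.map N.mkQ C = g • Submodule.map N.mkQ I := by
    simpa only [Submodule.map_sup, Submodule.map_pointwise_smul, Submodule.mkQ_map_self,
      sup_bot_eq] using congrArg (Submodule.map N.mkQ) h
  exact (quotient_of_smul_eq_smul (regular hf) (regular hg) h' hextN (hextC.of_linearEquiv
    (Submodule.quotientQuotientEquivQuotient N C hNC).symm)).of_linearEquiv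
      (Submodule.quotientQuotientEquivQuotient N I hNI)

end ExtVanishesBelow

end ExtVanishing

section PolynomialRing

open RingTheory.Sequence
open scoped Pointwise

variable {K : Type u} [Field K] {σ : Type}

/-- The residue field at the origin, as a module over the polynomial ring. -/
noncomputable abbrev originResidueField (K : Type u) [Field K] (σ : Type) :
    ModuleCat.{u} (MvPolynomial σ K) :=
  ModuleCat.of (MvPolynomial σ K) (MvPolynomial σ K ⧸ idealOfVars σ K)

theorem support_originResidueField : Module.support (MvPolynomial σ K) (originResidueField K σ) =
    PrimeSpectrum.zeroLocus (idealOfVars σ K) := by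
  rw [Module.support_eq_zeroLocus]
  exact congrArg (fun J : Ideal (MvPolynomial σ K) ↦ PrimeSpectrum.zeroLocus J.carrier)
    Ideal.annihilator_quotient

theorem idealOfVars_ne_top : idealOfVars σ K ≠ ⊤ := by
  intro h
  have h_le : idealOfVars σ K ≤ RingHom.ker (constantCoeff (σ := σ) (R := K)) :=
    Ideal.span_le.2 <| Set.range_subset_iff.2 fun v ↦ constantCoeff_X _ v
  exact RingHom.ker_ne_top _ (top_le_iff.1 (h ▸ h_le))

theorem idealOfVars_smul_top_lt_top {I : Ideal (MvPolynomial σ K)} (hI : I ≤ idealOfVars σ K) :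
    idealOfVars σ K • (⊤ : Submodule (MvPolynomial σ K) (MvPolynomial σ K ⧸ I)) < ⊤ := by
  refine lt_top_iff_ne_top.2 fun h ↦ idealOfVars_ne_top (K := K) (σ := σ) ?_
  have := congrArg (Submodule.comap I.mkQ) h
  rw [Submodule.comap_smul_top_of_surjective _ _ I.mkQ_surjective] at this
  simpa [hI] using this

theorem isSMulRegular_X_quotient_span_X_image {S : Set σ} {v : σ} (hv : v ∉ S) :
    IsSMulRegular (MvPolynomial σ K ⧸ Ideal.span (X '' S : Set (MvPolynomial σ K)))
      (X v : MvPolynomial σ K) := by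
  refine (isSMulRegular_quotient_iff_mem_of_smul_mem ..).2 fun z hz ↦ ?_
  rw [smul_eq_mul, mem_ideal_span_X_image] at hz
  refine mem_ideal_span_X_image.2 fun m hm ↦ ?_
  obtain ⟨w, hw, hmw⟩ := hz (Finsupp.single v 1 + m) (by
    rw [support_X_mul]
    exact Finset.mem_map.2 ⟨m, hm, rfl⟩)
  have hvw : v ≠ w := fun h ↦ hv (h ▸ hw)
  exact ⟨w, hw, by simpa [Finsupp.single_apply, hvw] using hmw⟩

theorem isWeaklyRegular_map_X {l : List σ} (hl : l.Nodup) :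
    IsWeaklyRegular (MvPolynomial σ K) (l.map (X : σ → MvPolynomial σ K)) := by
  refine ⟨fun i hi ↦ ?_⟩
  have h_take : Ideal.ofList ((l.map (X : σ → MvPolynomial σ K)).take i) =
      Ideal.span (X '' {v | v ∈ l.take i}) := by
    simp only [Ideal.ofList, ← List.map_take, List.mem_map]
    rfl
  have hi' : i < l.length := by simpa using hi
  rw [h_take, smul_eq_mul, Ideal.mul_top, List.getElem_map]
  refine isSMulRegular_X_quotient_span_X_image fun h_mem ↦ ?_
  obtain ⟨j, hj, h_eq⟩ := List.mem_take_iff_getElem.1 h_mem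
  have := (hl.getElem_inj_iff).1 h_eq
  omega

theorem extVanishesBelow_quotient_bot [Fintype σ] :
    ExtVanishesBelow (originResidueField K σ) (MvPolynomial σ K ⧸ (⊥ : Ideal (MvPolynomial σ K)))
      (Fintype.card σ) := by
  have h_lt := idealOfVars_smul_top_lt_top (bot_le : ⊥ ≤ idealOfVars σ K)
  let vars := (Finset.univ : Finset σ).toList.map (X : σ → MvPolynomial σ K)
  have h_mem : ∀ x ∈ vars, x ∈ idealOfVars σ K := by
    simpa [vars] using fun v ↦ Ideal.subset_span (Set.mem_range_self v)
  have h_weak : IsWeaklyRegular (MvPolynomial σ K ⧸ (⊥ : Ideal (MvPolynomial σ K))) vars :=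
    ((Submodule.quotEquivOfEqBot _ rfl).isWeaklyRegular_congr vars).2
      (isWeaklyRegular_map_X (Finset.nodup_toList _))
  have h_reg : IsRegular (MvPolynomial σ K ⧸ (⊥ : Ideal (MvPolynomial σ K))) vars :=
    ⟨h_weak, fun h ↦ h_lt.not_ge <| h.le.trans <|
      Submodule.smul_mono_left (Ideal.span_le.2 h_mem)⟩
  have h_len : vars.length = Fintype.card σ := by simp [vars]
  exact h_len ▸ ModuleCat.subsingleton_ext_of_exists_isRegular (idealOfVars σ K)
    (originResidueField K σ) support_originResidueField.subset (ModuleCat.of _ _) h_lt vars h_mem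
    h_reg

theorem isRegular_map_algebraMap {A B : Type*} [CommRing A] [CommRing B] [Algebra A B]
    {rs : List A} (h : IsRegular B rs) : IsRegular B (rs.map (algebraMap A B)) := by
  refine ⟨(isWeaklyRegular_map_algebraMap_iff (M := B) B rs).2 h.toIsWeaklyRegular, fun h_top ↦ ?_⟩
  rw [← Ideal.map_ofList, smul_eq_mul, Ideal.mul_top] at h_top
  exact h.top_ne_smul (by rw [Ideal.smul_top_eq_map, ← h_top, Submodule.restrictScalars_top])

theorem length_le_supportDim {A M : Type*} [CommRing A] [AddCommGroup M]
    [Module A M] [Module.Finite A M] {rs : List A} (h : IsRegular M rs) :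
    (rs.length : WithBot ℕ∞) ≤ Module.supportDim A M := by
  induction rs generalizing M with
  | nil =>
    have := h.nontrivial
    simpa [Module.supportDim] using
      Order.krullDim_nonneg_iff.2 (Module.nonempty_support_of_nontrivial.to_subtype)
  | cons r rs ih =>
    rw [isRegular_cons_iff] at h
    grw [List.length_cons, Nat.cast_succ, ih h.2]
    exact Module.supportDim_quotSMulTop_succ_le_of_notMem_minimalPrimes
      fun _ ↦ h.1.notMem_of_mem_minimalPrimes

theorem quotientIsCohenMacaulay_of_extVanishesBelow [Finite σ] {I : Ideal (MvPolynomial σ K)}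
    (hI : I ≤ idealOfVars σ K) {d : ℕ}
    (hext : ExtVanishesBelow (originResidueField K σ) (MvPolynomial σ K ⧸ I) d)
    (hdim : ringKrullDim (MvPolynomial σ K ⧸ I) ≤ d) : QuotientIsCohenMacaulay I := by
  have h_lt := idealOfVars_smul_top_lt_top hI
  obtain ⟨rs, h_len, h_mem, h_reg⟩ := ModuleCat.exists_isRegular_of_exists_subsingleton_ext
    (idealOfVars σ K) d (ModuleCat.of _ (MvPolynomial σ K ⧸ I)) h_lt (originResidueField K σ)
    support_originResidueField hext
  refine ⟨rs.map (algebraMap _ (MvPolynomial σ K ⧸ I)), ?_, ?_, ?_⟩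
  · simp only [List.mem_map, forall_exists_index, and_imp, forall_apply_eq_imp_iff₂]
    exact fun x hx ↦ Ideal.mem_map_of_mem _ (h_mem x hx)
  · exact isRegular_map_algebraMap h_reg
  · refine le_antisymm ?_ (by simpa [h_len] using hdim)
    rw [List.length_map, ← Module.supportDim_quotient_eq_ringKrullDim]
    exact length_le_supportDim h_reg

theorem ringKrullDim_quotient_bot_le [Fintype σ] :
    ringKrullDim (MvPolynomial σ K ⧸ (⊥ : Ideal (MvPolynomial σ K))) ≤
      (Fintype.card σ : WithBot ℕ∞) := by
  refine (ringKrullDim_quotient_le _).trans ?_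
  simp [MvPolynomial.ringKrullDim_of_isNoetherianRing]

end PolynomialRing

theorem ringKrullDim_quotient_add_one_le {R : Type*} [CommRing R] {N I : Ideal R} [N.IsPrime]
    (h : N < I) : ringKrullDim (R ⧸ I) + 1 ≤ ringKrullDim (R ⧸ N) := by
  obtain ⟨x, hxI, hxN⟩ := SetLike.exists_of_lt h
  refine ringKrullDim_succ_le_of_surjective (Ideal.Quotient.factor h.le)
    (Ideal.Quotient.factor_surjective h.le) (r := Ideal.Quotient.mk N x) ?_ ?_
  · exact mem_nonZeroDivisors_of_ne_zero (mt Ideal.Quotient.eq_zero_iff_mem.1 hxN)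
  · simpa [Ideal.Quotient.eq_zero_iff_mem] using hxI

section LinearIdeal

open Polynomial (eval₂RingHom)

variable {A κ : Type*} [CommRing A]

/-- The ideal of `A[X]` generated by `N` and the linear polynomials `X g_i + h_i`. -/
noncomputable def linearIdeal (N : Ideal A) (g h : κ → A) : Ideal (Polynomial A) :=
  N.map Polynomial.C ⊔
    Ideal.span (Set.range fun i ↦ Polynomial.X * Polynomial.C (g i) + Polynomial.C (h i))

variable {N : Ideal A} {g h : κ → A}

theorem exists_X_mul_C_add_C_mem_linearIdeal {c : A} (hc : c ∈ N ⊔ Ideal.span (Set.range g)) :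
    ∃ d, Polynomial.X * Polynomial.C c + Polynomial.C d ∈ linearIdeal N g h := by
  obtain ⟨a, ha, b, hb, rfl⟩ := Submodule.mem_sup.1 hc
  have ha' : Polynomial.C a ∈ linearIdeal N g h :=
    Ideal.mem_sup_left (Ideal.mem_map_of_mem _ ha)
  suffices hd : ∃ d, Polynomial.X * Polynomial.C b + Polynomial.C d ∈ linearIdeal N g h by
    obtain ⟨d, hd⟩ := hd
    refine ⟨d, ?_⟩
    convert add_mem (Ideal.mul_mem_left _ Polynomial.X ha') hd using 1
    rw [Polynomial.C_add]
    ring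
  clear hc
  induction hb using Submodule.span_induction with
  | mem b hb =>
    obtain ⟨i, rfl⟩ := hb
    exact ⟨h i, Ideal.mem_sup_right (Ideal.subset_span ⟨i, rfl⟩)⟩
  | zero => exact ⟨0, by simp⟩
  | add b c _ _ hb hc =>
    obtain ⟨d, hd⟩ := hb
    obtain ⟨e, he⟩ := hc
    refine ⟨d + e, ?_⟩
    convert add_mem hd he using 1
    simp only [Polynomial.C_add]
    ring
  | smul r b _ hb =>
    obtain ⟨d, hd⟩ := hb
    refine ⟨r * d, ?_⟩
    convert Ideal.mul_mem_left _ (Polynomial.C r) hd using 1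
    simp only [smul_eq_mul, Polynomial.C_mul]
    ring

/-- Evaluation `A[X] → Frac(A/N)` at the common root `-y/x` of the linear polynomials. -/
noncomputable def evalFraction (N : Ideal A) [N.IsPrime] (x y : A) :
    Polynomial A →+* FractionRing (A ⧸ N) :=
  eval₂RingHom (algebraMap A (FractionRing (A ⧸ N)))
    (-algebraMap A (FractionRing (A ⧸ N)) y / algebraMap A (FractionRing (A ⧸ N)) x)

theorem algebraMap_fractionRing_quotient_eq_zero_iff {a : A} :
    algebraMap A (FractionRing (A ⧸ N)) a = 0 ↔ a ∈ N := by
  rw [IsScalarTower.algebraMap_apply A (A ⧸ N), FaithfulSMul.algebraMap_eq_zero_iff]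
  exact Ideal.Quotient.eq_zero_iff_mem

variable [hN : N.IsPrime] {i₀ : κ}

theorem linearIdeal_le_ker_evalFraction (hgN : g i₀ ∉ N)
    (hcross : ∀ i, h i₀ * g i - g i₀ * h i ∈ N) :
    linearIdeal N g h ≤ RingHom.ker (evalFraction N (g i₀) (h i₀)) := by
  refine sup_le (Ideal.map_le_iff_le_comap.2 fun a ha ↦ ?_) (Ideal.span_le.2 ?_)
  · simpa [evalFraction] using algebraMap_fractionRing_quotient_eq_zero_iff.2 ha
  · rintro _ ⟨i, rfl⟩
    have hcross' := algebraMap_fractionRing_quotient_eq_zero_iff.2 (hcross i)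
    have hg := mt algebraMap_fractionRing_quotient_eq_zero_iff.1 hgN
    simp only [map_sub, map_mul] at hcross'
    simp only [evalFraction, SetLike.mem_coe, RingHom.mem_ker, map_add, map_mul,
      Polynomial.coe_eval₂RingHom, Polynomial.eval₂_X, Polynomial.eval₂_C]
    field_simp
    linear_combination -hcross'

/-- Clear denominators in `p(-y/x) = 0` and read the result modulo `x`, as for rational roots. -/
theorem pow_mul_leadingCoeff_mem_of_evalFraction_eq_zero {x y : A} (hx : x ∉ N)
    {p : Polynomial A} (hp : evalFraction N x y p = 0) :
    y ^ p.natDegree * p.leadingCoeff ∈ N ⊔ Ideal.span {x} := by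
  have hx' := mt algebraMap_fractionRing_quotient_eq_zero_iff.1 hx
  have h_scaled : (p.scaleRoots x).eval (-y) ∈ N := by
    rw [← algebraMap_fractionRing_quotient_eq_zero_iff, ← Polynomial.eval₂_at_apply, map_neg,
      ← mul_div_cancel₀ (-algebraMap A (FractionRing (A ⧸ N)) y) hx']
    exact Polynomial.scaleRoots_eval₂_eq_zero _ hp
  rw [Polynomial.eval_eq_sum_range, Polynomial.natDegree_scaleRoots, Finset.sum_range_succ,
    Polynomial.coeff_scaleRoots_natDegree] at h_scaled
  suffices h_lead : p.leadingCoeff * (-y) ^ p.natDegree ∈ N ⊔ Ideal.span {x} by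
    rwa [neg_pow, mul_left_comm, Ideal.unit_mul_mem_iff_mem _ (isUnit_one.neg.pow _),
      mul_comm] at h_lead
  refine (Submodule.add_mem_iff_right _ (Ideal.sum_mem _ fun j hj ↦ ?_)).1
    (Ideal.mem_sup_left h_scaled)
  rw [Polynomial.coeff_scaleRoots]
  have hj' : p.natDegree - j ≠ 0 := (Nat.sub_pos_of_lt (Finset.mem_range.1 hj)).ne'
  exact Ideal.mul_mem_right _ _ <| Ideal.mul_mem_left _ _ <| Ideal.mem_sup_right <|
    Ideal.mem_span_singleton.2 (dvd_pow_self x hj')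

theorem mem_of_pow_mul_mem {C : Ideal A} {y : A} (hy : ∀ a, y * a ∈ C → a ∈ C) {a : A} (n : ℕ)
    (h : y ^ n * a ∈ C) : a ∈ C := by
  induction n with
  | zero => simpa using h
  | succ n ih => exact ih (hy _ (by rwa [← mul_assoc, ← pow_succ']))

theorem ker_evalFraction_le_linearIdeal (hgN : g i₀ ∉ N)
    (hcross : ∀ i, h i₀ * g i - g i₀ * h i ∈ N)
    (hreg : ∀ a, h i₀ * a ∈ N ⊔ Ideal.span (Set.range g) → a ∈ N ⊔ Ideal.span (Set.range g)) :
    RingHom.ker (evalFraction N (g i₀) (h i₀)) ≤ linearIdeal N g h := by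
  intro p hp
  obtain ⟨n, hn⟩ : ∃ n, p.natDegree ≤ n := ⟨_, le_rfl⟩
  induction n generalizing p with
  | zero =>
    rw [Polynomial.eq_C_of_natDegree_le_zero hn] at hp ⊢
    refine Ideal.mem_sup_left (Ideal.mem_map_of_mem _ ?_)
    exact algebraMap_fractionRing_quotient_eq_zero_iff.1 (by simpa [evalFraction] using hp)
  | succ n ih =>
    rcases hn.eq_or_lt with hn | hn
    · have h_le : Ideal.span {g i₀} ≤ Ideal.span (Set.range g) :=
        Ideal.span_mono (Set.singleton_subset_iff.2 ⟨i₀, rfl⟩)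
      have h_lead : p.leadingCoeff ∈ N ⊔ Ideal.span (Set.range g) :=
        mem_of_pow_mul_mem hreg p.natDegree <| (sup_le_sup_left h_le N : _ ≤ _) <|
          pow_mul_leadingCoeff_mem_of_evalFraction_eq_zero hgN hp
      obtain ⟨d, hd⟩ := exists_X_mul_C_add_C_mem_linearIdeal (h := h) h_lead
      have hd' := Ideal.mul_mem_left _ (Polynomial.X ^ n) hd
      refine (Submodule.sub_mem_iff_left _ hd').1 (ih
        (sub_mem hp (linearIdeal_le_ker_evalFraction hgN hcross hd')) ?_)
      refine Polynomial.natDegree_le_iff_coeff_eq_zero.2 fun j hj ↦ ?_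
      rw [mul_add, ← mul_assoc, ← pow_succ, Polynomial.coeff_sub, Polynomial.coeff_add,
        Polynomial.coeff_mul_C, Polynomial.coeff_mul_C, Polynomial.coeff_X_pow,
        Polynomial.coeff_X_pow, if_neg hj.ne', ← hn, Polynomial.leadingCoeff]
      split_ifs with h_eq
      · simp [h_eq]
      · simp [Polynomial.coeff_eq_zero_of_natDegree_lt (show p.natDegree < j by omega)]
    · exact ih hp (Nat.lt_succ_iff.1 hn)

theorem linearIdeal_isPrime (hgN : g i₀ ∉ N) (hcross : ∀ i, h i₀ * g i - g i₀ * h i ∈ N)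
    (hreg : ∀ a, h i₀ * a ∈ N ⊔ Ideal.span (Set.range g) → a ∈ N ⊔ Ideal.span (Set.range g)) :
    (linearIdeal N g h).IsPrime := by
  rw [le_antisymm (linearIdeal_le_ker_evalFraction hgN hcross)
    (ker_evalFraction_le_linearIdeal hgN hcross hreg)]
  exact RingHom.ker_isPrime _

end LinearIdeal

section IsolateVariable

open Classical in
/-- `R[x_u : u ∈ σ]` as a polynomial ring in the single variable `x_v`. -/
noncomputable def isolateVar (R : Type*) [CommRing R] {σ : Type*} (v : σ) :
    Polynomial (MvPolynomial {u // u ≠ v} R) ≃ₐ[R] MvPolynomial σ R :=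
  (optionEquivLeft R {u // u ≠ v}).symm.trans (renameEquiv R (Equiv.optionSubtypeNe v))

/-- The inclusion of the polynomials not involving the variable `x_v`. -/
noncomputable abbrev renameNe (R : Type*) [CommRing R] {σ : Type*} (v : σ) :
    MvPolynomial {u // u ≠ v} R →ₐ[R] MvPolynomial σ R :=
  rename Subtype.val

variable {R σ κ : Type*} [CommRing R] {v : σ}

theorem mem_supported_compl_singleton_iff {p : MvPolynomial σ R} :
    p ∈ supported R {v}ᶜ ↔ ∃ a, renameNe R v a = p := by
  rw [supported_eq_range_rename]
  rfl

theorem isolateVar_X : isolateVar R v Polynomial.X = X v := by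
  simp [isolateVar]

theorem isolateVar_C (a : MvPolynomial {u // u ≠ v} R) :
    isolateVar R v (Polynomial.C a) = renameNe R v a := by
  suffices h : (isolateVar R v).toAlgHom.comp (Polynomial.CAlgHom (R := R)) = renameNe R v from
    DFunLike.congr_fun h a
  ext u
  simp [isolateVar]

theorem map_linearIdeal_isolateVar (N : Ideal (MvPolynomial {u // u ≠ v} R))
    (g h : κ → MvPolynomial {u // u ≠ v} R) :
    (linearIdeal N g h).map (isolateVar R v).toRingEquiv = N.map (renameNe R v) ⊔
      Ideal.span (Set.range fun i ↦ X v * renameNe R v (g i) + renameNe R v (h i)) := by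
  have h_comp : (isolateVar R v).toRingEquiv.toRingHom.comp Polynomial.C =
      (renameNe R v).toRingHom :=
    RingHom.ext isolateVar_C
  rw [linearIdeal, Ideal.map_sup, Ideal.map_span, ← Set.range_comp]
  congr 1
  · exact (Ideal.map_map Polynomial.C (isolateVar R v).toRingEquiv.toRingHom).trans
      (congrArg (Ideal.map · N) h_comp)
  · refine congrArg (fun f ↦ Ideal.span (Set.range f)) (funext fun i ↦ ?_)
    exact (map_add (isolateVar R v) _ _).trans (by rw [map_mul, isolateVar_X, isolateVar_C,
      isolateVar_C])

theorem map_comap_renameNe_span {G : Set (MvPolynomial σ R)} (hG : G ⊆ supported R {v}ᶜ) :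
    ((Ideal.span G).comap (renameNe R v)).map (renameNe R v) = Ideal.span G := by
  refine le_antisymm Ideal.map_comap_le (Ideal.span_le.2 fun x hx ↦ ?_)
  obtain ⟨a, rfl⟩ := mem_supported_compl_singleton_iff.1 (hG hx)
  exact Ideal.mem_map_of_mem _ (Ideal.subset_span hx)

theorem comap_map_renameNe (J : Ideal (MvPolynomial {u // u ≠ v} R)) :
    (J.map (renameNe R v)).comap (renameNe R v) = J := by
  refine le_antisymm (fun a ha ↦ ?_) Ideal.le_comap_map
  have h := Ideal.mem_map_of_mem (killCompl (R := R) (f := fun u : {u // u ≠ v} ↦ u.1)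
    Subtype.val_injective) (Ideal.mem_comap.1 ha)
  rw [Ideal.map_mapₐ, killCompl_comp_rename, killCompl_rename_app] at h
  simpa using h

theorem isPrime_span_sup_span_X_mul_add {G : Set (MvPolynomial σ R)}
    {g h : κ → MvPolynomial σ R} {i₀ : κ} (hG : G ⊆ supported R {v}ᶜ)
    (hg : ∀ i, g i ∈ supported R {v}ᶜ) (hh : ∀ i, h i ∈ supported R {v}ᶜ)
    [hN : (Ideal.span G).IsPrime] (hgN : g i₀ ∉ Ideal.span G)
    (hcross : ∀ i, h i₀ * g i - g i₀ * h i ∈ Ideal.span G)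
    (hreg : ∀ a, h i₀ * a ∈ Ideal.span G ⊔ Ideal.span (Set.range g) →
      a ∈ Ideal.span G ⊔ Ideal.span (Set.range g)) :
    (Ideal.span G ⊔ Ideal.span (Set.range fun i ↦ X v * g i + h i)).IsPrime := by
  choose g' hg' using fun i ↦ mem_supported_compl_singleton_iff.1 (hg i)
  choose h' hh' using fun i ↦ mem_supported_compl_singleton_iff.1 (hh i)
  have h_sup : ((Ideal.span G).comap (renameNe R v) ⊔ Ideal.span (Set.range g')).map
      (renameNe R v) = Ideal.span G ⊔ Ideal.span (Set.range g) := by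
    rw [Ideal.map_sup, map_comap_renameNe_span hG, Ideal.map_span, ← Set.range_comp]
    exact congrArg (fun g ↦ Ideal.span G ⊔ Ideal.span (Set.range g)) (funext hg')
  have prime : (linearIdeal ((Ideal.span G).comap (renameNe R v)) g' h').IsPrime := by
    refine linearIdeal_isPrime (i₀ := i₀) (by rwa [Ideal.mem_comap, hg']) (fun i ↦ ?_) fun a ha ↦ ?_
    · simpa only [Ideal.mem_comap, map_sub, map_mul, hg', hh'] using hcross i
    · rw [← comap_map_renameNe (_ ⊔ _), h_sup, Ideal.mem_comap] at ha ⊢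
      exact hreg _ (by rwa [map_mul, hh'] at ha)
  have prime_map := Ideal.map_isPrime_of_equiv (isolateVar R v).toRingEquiv
    (I := linearIdeal ((Ideal.span G).comap (renameNe R v)) g' h')
  rw [map_linearIdeal_isolateVar, map_comap_renameNe_span hG] at prime_map
  simpa only [hg', hh'] using prime_map

end IsolateVariable

section Minors

open Matrix

variable {R R' : Type*} [CommRing R] [CommRing R'] {m n k a b : ℕ} {A : Matrix (Fin m) (Fin n) R}

/-- The set of `k × k` minors of the top left `a × b` block of `A`. Rows and columns may be repeated
and come in any order, which only adds zeros and signs. -/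
def minors (A : Matrix (Fin m) (Fin n) R) (k a b : ℕ) : Set R :=
  {x | ∃ (r : Fin k → Fin m) (c : Fin k → Fin n),
    (∀ i, (r i : ℕ) < a) ∧ (∀ j, (c j : ℕ) < b) ∧ (A.submatrix r c).det = x}

/-- The ideal generated by the `k × k` minors of the top left `a × b` block of `A`. -/
def minorIdeal (A : Matrix (Fin m) (Fin n) R) (k a b : ℕ) : Ideal R :=
  Ideal.span (minors A k a b)

theorem minorIdeal_le_iff {I : Ideal R} : minorIdeal A k a b ≤ I ↔
    ∀ (r : Fin k → Fin m) (c : Fin k → Fin n), (∀ i, (r i : ℕ) < a) → (∀ j, (c j : ℕ) < b) →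
      (A.submatrix r c).det ∈ I := by
  refine Ideal.span_le.trans ⟨fun h r c hr hc ↦ h ⟨r, c, hr, hc, rfl⟩, ?_⟩
  rintro h _ ⟨r, c, hr, hc, rfl⟩
  exact h r c hr hc

theorem minorIdeal_mono {a' b' : ℕ} (ha : a ≤ a') (hb : b ≤ b') :
    minorIdeal A k a b ≤ minorIdeal A k a' b' :=
  Ideal.span_mono fun _ ⟨r, c, hr, hc, h⟩ ↦
    ⟨r, c, fun i ↦ (hr i).trans_le ha, fun j ↦ (hc j).trans_le hb, h⟩

theorem minors_transpose : minors Aᵀ k b a = minors A k a b := by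
  ext x
  refine ⟨fun ⟨c, r, hc, hr, h⟩ ↦ ⟨r, c, hr, hc, ?_⟩, fun ⟨r, c, hr, hc, h⟩ ↦ ⟨c, r, hc, hr, ?_⟩⟩
  · rwa [← transpose_submatrix, det_transpose] at h
  · rwa [← transpose_submatrix, det_transpose]

theorem minorIdeal_transpose : minorIdeal Aᵀ k b a = minorIdeal A k a b :=
  congrArg Ideal.span minors_transpose

theorem minorIdeal_zero : minorIdeal A 0 a b = ⊤ :=
  (Ideal.eq_top_iff_one _).2 <| Ideal.subset_span
    ⟨Fin.elim0, Fin.elim0, Fin.rec0, Fin.rec0, det_fin_zero⟩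

theorem map_mem_minors (φ : R →+* R') {x : R} (hx : x ∈ minors A k a b) :
    φ x ∈ minors (A.map φ) k a b := by
  obtain ⟨r, c, hr, hc, rfl⟩ := hx
  exact ⟨r, c, hr, hc, (φ.map_det _).symm⟩

theorem associated_det_submatrix {ι κ : Type*} [Fintype ι] [DecidableEq ι] [Fintype κ]
    [DecidableEq κ] (M : Matrix κ κ R) (e₁ e₂ : ι ≃ κ) :
    Associated M.det (M.submatrix e₁ e₂).det := by
  have h : M.submatrix e₁ e₂ = (M.submatrix id (e₁.symm.trans e₂)).submatrix e₁ e₁ := by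
    ext i j
    simp
  rw [h, det_submatrix_equiv_self, det_permute', mul_comm]
  exact associated_mul_unit_right _ _ ((Equiv.Perm.sign (e₁.symm.trans e₂)).isUnit.map
    (Int.castRingHom R))

theorem det_submatrix_mem_minorIdeal {ι : Type*} [Fintype ι] [DecidableEq ι] {r : ι → Fin m}
    {c : ι → Fin n} (hk : Fintype.card ι = k) (hr : ∀ i, (r i : ℕ) < a) (hc : ∀ j, (c j : ℕ) < b) :
    (A.submatrix r c).det ∈ minorIdeal A k a b := by
  obtain ⟨e⟩ := Fintype.truncEquivFinOfCardEq hk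
  rw [← det_submatrix_equiv_self e.symm, submatrix_submatrix]
  exact Ideal.subset_span ⟨_, _, fun i ↦ hr _, fun j ↦ hc _, rfl⟩

theorem det_submatrix_eq_zero_of_not_injective_left {r : Fin k → Fin m}
    (hr : ¬ Function.Injective r) (c : Fin k → Fin n) : (A.submatrix r c).det = 0 := by
  obtain ⟨i, i', h, hne⟩ := Function.not_injective_iff.1 hr
  exact det_zero_of_row_eq hne (by ext j; simp [h])

theorem det_submatrix_eq_zero_of_not_injective_right (r : Fin k → Fin m) {c : Fin k → Fin n}
    (hc : ¬ Function.Injective c) : (A.submatrix r c).det = 0 := by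
  rw [← det_transpose, transpose_submatrix]
  exact det_submatrix_eq_zero_of_not_injective_left hc r

theorem minorIdeal_le_of_strictMono_of_strictAnti {I : Ideal R}
    (h : ∀ (r : Fin k → Fin m) (c : Fin k → Fin n), StrictMono r → StrictAnti c →
      (∀ i, (r i : ℕ) < a) → (∀ j, (c j : ℕ) < b) → (A.submatrix r c).det ∈ I) :
    minorIdeal A k a b ≤ I := by
  refine minorIdeal_le_iff.2 fun r c hr hc ↦ ?_
  by_cases hr_inj : Function.Injective r
  swap
  · rw [det_submatrix_eq_zero_of_not_injective_left hr_inj]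
    exact zero_mem I
  by_cases hc_inj : Function.Injective c
  swap
  · rw [det_submatrix_eq_zero_of_not_injective_right _ hc_inj]
    exact zero_mem I
  have hr_sorted : StrictMono (r ∘ Tuple.sort r) :=
    (Tuple.monotone_sort r).strictMono_of_injective (hr_inj.comp (Tuple.sort r).injective)
  have hc_sorted : StrictMono (c ∘ Tuple.sort c) :=
    (Tuple.monotone_sort c).strictMono_of_injective (hc_inj.comp (Tuple.sort c).injective)
  refine (Ideal.mem_iff_of_associated (associated_det_submatrix (A.submatrix r c) (Tuple.sort r)
    (Fin.revPerm.trans (Tuple.sort c)))).2 ?_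
  exact h _ _ hr_sorted (hc_sorted.comp_strictAnti Fin.rev_strictAnti) (fun _ ↦ hr _) fun _ ↦ hc _

theorem minorIdeal_succ_row_le :
    minorIdeal A (k + 1) (a + 1) b ≤ minorIdeal A k a b := by
  refine minorIdeal_le_iff.2 fun r c hr hc ↦ ?_
  by_cases hinj : Function.Injective r
  · obtain ⟨i₀, hi₀⟩ : ∃ i₀, ∀ i, i ≠ i₀ → (r i : ℕ) < a := by
      by_cases h : ∃ i₀, (r i₀ : ℕ) = a
      · obtain ⟨i₀, hi₀⟩ := h
        refine ⟨i₀, fun i hi ↦ (Nat.le_of_lt_succ (hr i)).lt_of_ne fun h ↦ hi (hinj ?_)⟩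
        exact Fin.ext (h.trans hi₀.symm)
      · push Not at h
        exact ⟨0, fun i _ ↦ (Nat.le_of_lt_succ (hr i)).lt_of_ne (h i)⟩
    rw [det_succ_row _ i₀]
    refine Ideal.sum_mem _ fun j _ ↦ Ideal.mul_mem_left _ _ ?_
    rw [submatrix_submatrix]
    exact Ideal.subset_span ⟨_, _, fun i ↦ hi₀ _ (Fin.succAbove_ne i₀ i), fun _ ↦ hc _, rfl⟩
  · rw [det_submatrix_eq_zero_of_not_injective_left hinj]
    exact zero_mem _

theorem minorIdeal_add_row_le (d : ℕ) :
    minorIdeal A (k + d) (a + d) b ≤ minorIdeal A k a b := by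
  induction d with
  | zero => exact le_rfl
  | succ d ih => exact minorIdeal_succ_row_le.trans ih

theorem minorIdeal_add_col_le (d : ℕ) :
    minorIdeal A (k + d) a (b + d) ≤ minorIdeal A k a b := by
  simpa only [minorIdeal_transpose] using minorIdeal_add_row_le (A := Aᵀ) (k := k) (b := a) d

theorem minorIdeal_eq_bot_of_row_support {lo : ℕ} (ha : a ≤ lo + k)
    (hA : ∀ (x : Fin m) (y : Fin n), (x : ℕ) < a → (y : ℕ) < b → A x y ≠ 0 → lo ≤ x) :
    minorIdeal A (k + 1) a b = ⊥ := by
  refine le_bot_iff.1 (minorIdeal_le_iff.2 fun r c hr hc ↦ ?_)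
  by_cases hlo : ∀ i, lo ≤ (r i : ℕ)
  · suffices h : ¬ Function.Injective r from det_submatrix_eq_zero_of_not_injective_left h c
    obtain ⟨i, _, i', _, hne, h⟩ := Finset.exists_ne_map_eq_of_card_lt_of_maps_to
      (s := Finset.univ) (t := Finset.Ico lo a) (f := fun i ↦ (r i : ℕ))
      (by rw [Nat.card_Ico, Finset.card_fin]; omega)
      fun i _ ↦ Finset.mem_Ico.2 ⟨hlo i, hr i⟩
    exact fun hr ↦ hne (hr (Fin.ext h))
  · push Not at hlo
    obtain ⟨i, hi⟩ := hlo
    refine det_eq_zero_of_row_eq_zero i fun j ↦ ?_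
    by_contra h
    exact (hA _ _ (hr i) (hc j) h).not_gt hi

theorem minorIdeal_eq_bot_of_col_support {lo : ℕ} (hb : b ≤ lo + k)
    (hA : ∀ (x : Fin m) (y : Fin n), (x : ℕ) < a → (y : ℕ) < b → A x y ≠ 0 → lo ≤ y) :
    minorIdeal A (k + 1) a b = ⊥ := by
  rw [← minorIdeal_transpose]
  exact minorIdeal_eq_bot_of_row_support hb fun y x hy hx ↦ hA x y hx hy

end Minors

section BorderedMinors

open Matrix

variable {R : Type*} {m n k : ℕ} {A : Matrix (Fin m) (Fin n) R} {α : Fin m} {β : Fin n}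

/-- The submatrix of `A` on the rows `r`, `α` and the columns `c`, `β`, with the corner entry
`A α β` replaced by `x`. -/
def borderedMatrix (A : Matrix (Fin m) (Fin n) R) (r : Fin k → Fin m) (c : Fin k → Fin n)
    (α : Fin m) (β : Fin n) (x : R) : Matrix (Fin k ⊕ Unit) (Fin k ⊕ Unit) R :=
  fromBlocks (A.submatrix r c) (A.submatrix r fun _ ↦ β) (A.submatrix (fun _ ↦ α) c)
    (of fun _ _ ↦ x)

theorem borderedMatrix_eq_submatrix {r : Fin k → Fin m} {c : Fin k → Fin n} :
    borderedMatrix A r c α β (A α β) =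
      A.submatrix (Sum.elim r fun _ ↦ α) (Sum.elim c fun _ ↦ β) := by
  ext (i | i) (j | j) <;> rfl

variable [CommRing R]

theorem det_borderedMatrix (r : Fin k → Fin m) (c : Fin k → Fin n) (x : R) :
    (borderedMatrix A r c α β x).det =
      x * (A.submatrix r c).det + (borderedMatrix A r c α β 0).det := by
  have h_split : borderedMatrix A r c α β x = (borderedMatrix A r c α β 0).updateRow (Sum.inr ())
      (x • Sum.elim (0 : Fin k → R) (1 : Unit → R) + borderedMatrix A r c α β 0 (Sum.inr ())) := by
    ext (i | i) (j | j) <;> simp [borderedMatrix, updateRow_apply]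
  have h_block : (borderedMatrix A r c α β 0).updateRow (Sum.inr ())
      (Sum.elim (0 : Fin k → R) (1 : Unit → R)) =
        fromBlocks (A.submatrix r c) (A.submatrix r fun _ ↦ β) 0 1 := by
    ext (i | i) (j | j) <;> simp [borderedMatrix, updateRow_apply]
  rw [h_split, det_updateRow_add, det_updateRow_smul, h_block, det_fromBlocks_zero₂₁, det_one,
    mul_one, updateRow_eq_self]

/-- The index set of the `k × k` minors of the block above and to the left of the entry `(α, β)`. -/
abbrev MinorIndex (k : ℕ) (α : Fin m) (β : Fin n) : Type :=
  {r : Fin k → Fin m // ∀ i, r i < α} × {c : Fin k → Fin n // ∀ j, c j < β}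

theorem span_range_det_submatrix :
    Ideal.span (Set.range fun i : MinorIndex k α β ↦ (A.submatrix i.1.1 i.2.1).det) =
      minorIdeal A k α β := by
  refine congrArg Ideal.span (Set.ext fun x ↦ ⟨?_, ?_⟩)
  · rintro ⟨⟨r, c⟩, rfl⟩
    exact ⟨r, c, r.2, c.2, rfl⟩
  · rintro ⟨r, c, hr, hc, rfl⟩
    exact ⟨(⟨r, hr⟩, ⟨c, hc⟩), rfl⟩

theorem exists_sum_equiv_fin (i : Fin (k + 1)) :
    ∃ e : Fin k ⊕ Unit ≃ Fin (k + 1), e (Sum.inr ()) = i ∧ ∀ j, e (Sum.inl j) = i.succAbove j :=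
  ⟨(Equiv.optionEquivSumPUnit (Fin k)).symm.trans (finSuccEquiv' i).symm, by simp, by simp⟩

theorem det_submatrix_mem_span_det_borderedMatrix {r : Fin (k + 1) → Fin m}
    {c : Fin (k + 1) → Fin n} {i₀ j₀ : Fin (k + 1)} (hi₀ : r i₀ = α) (hj₀ : c j₀ = β)
    (hr : ∀ i, i ≠ i₀ → r i < α) (hc : ∀ j, j ≠ j₀ → c j < β) :
    (A.submatrix r c).det ∈ Ideal.span
      (Set.range fun i : MinorIndex k α β ↦ (borderedMatrix A i.1.1 i.2.1 α β (A α β)).det) := by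
  obtain ⟨er, her_last, her⟩ := exists_sum_equiv_fin i₀
  obtain ⟨ec, hec_last, hec⟩ := exists_sum_equiv_fin j₀
  rw [Ideal.mem_iff_of_associated (associated_det_submatrix _ er ec), submatrix_submatrix]
  refine Ideal.subset_span ⟨(⟨r ∘ i₀.succAbove, fun i ↦ hr _ (Fin.succAbove_ne i₀ i)⟩,
    ⟨c ∘ j₀.succAbove, fun j ↦ hc _ (Fin.succAbove_ne j₀ j)⟩), ?_⟩
  dsimp only
  rw [borderedMatrix_eq_submatrix]
  congr 2
  · ext (i | i)
    · simp [her]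
    · simp [her_last, hi₀]
  · ext (j | j)
    · simp [hec]
    · simp [hec_last, hj₀]

theorem span_det_borderedMatrix_le_minorIdeal :
    Ideal.span
        (Set.range fun i : MinorIndex k α β ↦ (borderedMatrix A i.1.1 i.2.1 α β (A α β)).det) ≤
      minorIdeal A (k + 1) (α + 1) (β + 1) := by
  refine Ideal.span_le.2 (Set.range_subset_iff.2 fun ⟨r, c⟩ ↦ ?_)
  dsimp only
  rw [borderedMatrix_eq_submatrix]
  refine det_submatrix_mem_minorIdeal (by simp) ?_ ?_
  · rintro (i | _)
    · exact Nat.lt_succ_of_lt (r.2 i)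
    · exact Nat.lt_succ_self _
  · rintro (j | _)
    · exact Nat.lt_succ_of_lt (c.2 j)
    · exact Nat.lt_succ_self _

theorem minorIdeal_succ_eq_sup :
    minorIdeal A (k + 1) (α + 1) (β + 1) = minorIdeal A (k + 1) α (β + 1) ⊔
      minorIdeal A (k + 1) (α + 1) β ⊔ Ideal.span
        (Set.range fun i : MinorIndex k α β ↦ (borderedMatrix A i.1.1 i.2.1 α β (A α β)).det) := by
  refine le_antisymm (minorIdeal_le_iff.2 fun r c hr hc ↦ ?_) (sup_le (sup_le ?_ ?_) ?_)
  · by_cases hrα : ∃ i₀, r i₀ = α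
    swap
    · push Not at hrα
      refine Ideal.mem_sup_left (Ideal.mem_sup_left (det_submatrix_mem_minorIdeal (by simp) ?_ hc))
      exact fun i ↦ (Nat.le_of_lt_succ (hr i)).lt_of_ne (Fin.val_ne_of_ne (hrα i))
    by_cases hcβ : ∃ j₀, c j₀ = β
    swap
    · push Not at hcβ
      refine Ideal.mem_sup_left (Ideal.mem_sup_right (det_submatrix_mem_minorIdeal (by simp) hr ?_))
      exact fun j ↦ (Nat.le_of_lt_succ (hc j)).lt_of_ne (Fin.val_ne_of_ne (hcβ j))
    obtain ⟨i₀, hi₀⟩ := hrα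
    obtain ⟨j₀, hj₀⟩ := hcβ
    by_cases hr_inj : Function.Injective r
    swap
    · rw [det_submatrix_eq_zero_of_not_injective_left hr_inj]
      exact zero_mem _
    by_cases hc_inj : Function.Injective c
    swap
    · rw [det_submatrix_eq_zero_of_not_injective_right _ hc_inj]
      exact zero_mem _
    refine Ideal.mem_sup_right (det_submatrix_mem_span_det_borderedMatrix hi₀ hj₀ ?_ ?_)
    · exact fun i hi ↦ (Nat.le_of_lt_succ (hr i)).lt_of_ne
        (Fin.val_ne_of_ne fun h ↦ hi (hr_inj (h.trans hi₀.symm)))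
    · exact fun j hj ↦ (Nat.le_of_lt_succ (hc j)).lt_of_ne
        (Fin.val_ne_of_ne fun h ↦ hj (hc_inj (h.trans hj₀.symm)))
  · exact minorIdeal_mono (Nat.le_succ _) le_rfl
  · exact minorIdeal_mono le_rfl (Nat.le_succ _)
  · exact span_det_borderedMatrix_le_minorIdeal

end BorderedMinors

section CrossRatio

open Matrix

variable {m n k : ℕ} {α : Fin m} {β : Fin n}

theorem apply_eq_mul_inv_mul_of_minorIdeal_eq_bot {F : Type*} [Field F]
    {B : Matrix (Fin m) (Fin n) F} (hrow : minorIdeal B (k + 1) α (β + 1) = ⊥)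
    (hcol : minorIdeal B (k + 1) (α + 1) β = ⊥) (i₀ : MinorIndex k α β)
    (h₀ : (B.submatrix i₀.1.1 i₀.2.1).det ≠ 0) {ι κ : Type*} {x : ι → Fin m} {y : κ → Fin n}
    (hx : ∀ i, x i ≤ α) (hy : ∀ j, y j ≤ β) (hxy : (∀ i, x i < α) ∨ ∀ j, y j < β) :
    B.submatrix x y =
      B.submatrix x i₀.2.1 * (B.submatrix i₀.1.1 i₀.2.1)⁻¹ * B.submatrix i₀.1.1 y := by
  ext i j
  have : Invertible (B.submatrix i₀.1.1 i₀.2.1) := invertibleOfIsUnitDet _ h₀.isUnit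
  have h_zero : (borderedMatrix B i₀.1.1 i₀.2.1 (x i) (y j) (B (x i) (y j))).det = 0 := by
    rw [← Ideal.mem_bot, borderedMatrix_eq_submatrix]
    rcases hxy with hxα | hyβ
    · rw [← hrow]
      refine det_submatrix_mem_minorIdeal (by simp) ?_ ?_
      · exact Sum.rec i₀.1.2 fun _ ↦ hxα i
      · exact Sum.rec (fun l ↦ Nat.lt_succ_of_lt (i₀.2.2 l)) fun _ ↦ Nat.lt_succ_of_le (hy j)
    · rw [← hcol]
      refine det_submatrix_mem_minorIdeal (by simp) ?_ ?_
      · exact Sum.rec (fun l ↦ Nat.lt_succ_of_lt (i₀.1.2 l)) fun _ ↦ Nat.lt_succ_of_le (hx i)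
      · exact Sum.rec i₀.2.2 fun _ ↦ hyβ j
  rw [borderedMatrix, det_fromBlocks₁₁, mul_eq_zero, or_iff_right h₀, det_unique,
    invOf_eq_nonsing_inv, Matrix.sub_apply, sub_eq_zero] at h_zero
  exact h_zero

/-- All blocks of a bordered matrix other than the corner are products through the fixed `k × k`
block, so the two bordered minors differ by the same factor as the minors they border. -/
theorem det_borderedMatrix_mul_det_eq {F : Type*} [Field F]
    {B : Matrix (Fin m) (Fin n) F} (hrow : minorIdeal B (k + 1) α (β + 1) = ⊥)
    (hcol : minorIdeal B (k + 1) (α + 1) β = ⊥) (i₀ : MinorIndex k α β)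
    (h₀ : (B.submatrix i₀.1.1 i₀.2.1).det ≠ 0) (i : MinorIndex k α β) (x : F) :
    (borderedMatrix B i₀.1.1 i₀.2.1 α β x).det * (B.submatrix i.1.1 i.2.1).det =
      (B.submatrix i₀.1.1 i₀.2.1).det * (borderedMatrix B i.1.1 i.2.1 α β x).det := by
  set D := B.submatrix i₀.1.1 i₀.2.1 with hD
  have factor {ι κ : Type} {x : ι → Fin m} {y : κ → Fin n} :=
    apply_eq_mul_inv_mul_of_minorIdeal_eq_bot hrow hcol i₀ h₀ (x := x) (y := y)
  set P := B.submatrix i.1.1 i₀.2.1 * D⁻¹ with hP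
  set Q := D⁻¹ * B.submatrix i₀.1.1 i.2.1 with hQ
  have hunit : IsUnit D.det := h₀.isUnit
  have h_minor : B.submatrix i.1.1 i.2.1 = P * D * Q := by
    rw [factor (fun l ↦ (i.1.2 l).le) (fun l ↦ (i.2.2 l).le) (Or.inl i.1.2), hP, hQ,
      nonsing_inv_mul_cancel_right _ _ hunit, Matrix.mul_assoc]
  have h_bordered : borderedMatrix B i.1.1 i.2.1 α β x =
      fromBlocks P 0 0 1 * borderedMatrix B i₀.1.1 i₀.2.1 α β x * fromBlocks Q 0 0 1 := by
    rw [borderedMatrix, h_minor, borderedMatrix, fromBlocks_multiply, fromBlocks_multiply,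
      factor (fun l ↦ (i.1.2 l).le) (fun _ ↦ le_rfl) (Or.inl i.1.2),
      factor (fun _ ↦ le_rfl) (fun l ↦ (i.2.2 l).le) (Or.inr i.2.2)]
    simp [hP, hQ, hD, Matrix.mul_assoc]
  rw [h_bordered, h_minor]
  simp only [det_mul, det_fromBlocks_zero₂₁, det_one]
  ring

theorem map_borderedMatrix {R R' : Type*} (φ : R → R') (A : Matrix (Fin m) (Fin n) R)
    (r : Fin k → Fin m) (c : Fin k → Fin n) (x : R) :
    (borderedMatrix A r c α β x).map φ = borderedMatrix (A.map φ) r c α β (φ x) :=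
  fromBlocks_map ..

theorem det_borderedMatrix_mul_det_sub_mem {R : Type*} [CommRing R] {A : Matrix (Fin m) (Fin n) R}
    {N : Ideal R} [N.IsPrime] (hrow : minorIdeal A (k + 1) α (β + 1) ≤ N)
    (hcol : minorIdeal A (k + 1) (α + 1) β ≤ N) {i₀ : MinorIndex k α β}
    (h₀ : (A.submatrix i₀.1.1 i₀.2.1).det ∉ N) (i : MinorIndex k α β) (x : R) :
    (borderedMatrix A i₀.1.1 i₀.2.1 α β x).det * (A.submatrix i.1.1 i.2.1).det -
      (A.submatrix i₀.1.1 i₀.2.1).det * (borderedMatrix A i.1.1 i.2.1 α β x).det ∈ N := by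
  let φ := algebraMap R (FractionRing (R ⧸ N))
  have hφ {a b : ℕ} (h : minorIdeal A (k + 1) a b ≤ N) : minorIdeal (A.map φ) (k + 1) a b = ⊥ := by
    refine le_bot_iff.1 (minorIdeal_le_iff.2 fun r c hr hc ↦ ?_)
    exact (φ.map_det _).symm.trans <| algebraMap_fractionRing_quotient_eq_zero_iff.2 <|
      h (Ideal.subset_span ⟨r, c, hr, hc, rfl⟩)
  rw [← algebraMap_fractionRing_quotient_eq_zero_iff] at h₀ ⊢
  have h := det_borderedMatrix_mul_det_eq (hφ hrow) (hφ hcol) i₀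
    (by rwa [submatrix_map, ← φ.mapMatrix_apply, ← φ.map_det]) i (φ x)
  simp only [← map_borderedMatrix, submatrix_map] at h
  simpa only [map_sub, map_mul, RingHom.map_det, RingHom.mapMatrix_apply, sub_eq_zero] using h

end CrossRatio

section CohenMacaulayPrime

open scoped Pointwise

theorem smul_sup_le_smul_sup {R κ : Type*} [CommRing R] {N : Ideal R} {f g : κ → R} {i₀ : κ}
    (h : ∀ i, f i₀ * g i - g i₀ * f i ∈ N) :
    f i₀ • (N ⊔ Ideal.span (Set.range g)) ⊔ N ≤ g i₀ • (N ⊔ Ideal.span (Set.range f)) ⊔ N := by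
  refine sup_le ?_ le_sup_right
  rw [Submodule.smul_sup', Ideal.span, Submodule.smul_span]
  refine sup_le (le_sup_of_le_right (Submodule.smul_le_self_of_tower _ _))
    (Submodule.span_le.2 ?_)
  rintro _ ⟨_, ⟨i, rfl⟩, rfl⟩
  refine (Submodule.sub_mem_iff_left _ (Ideal.mem_sup_left ?_)).1 (Ideal.mem_sup_right (h i))
  exact Submodule.smul_mem_pointwise_smul _ _ _
    (Ideal.mem_sup_right (Ideal.subset_span (Set.mem_range_self i)))

theorem smul_sup_eq_smul_sup {R κ : Type*} [CommRing R] {N : Ideal R} {f g : κ → R} {i₀ : κ}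
    (h : ∀ i, f i₀ * g i - g i₀ * f i ∈ N) :
    f i₀ • (N ⊔ Ideal.span (Set.range g)) ⊔ N = g i₀ • (N ⊔ Ideal.span (Set.range f)) ⊔ N :=
  le_antisymm (smul_sup_le_smul_sup h) <| smul_sup_le_smul_sup fun i ↦ by
    simpa only [neg_sub] using N.neg_mem (h i)

theorem pderiv_mem_span {R σ : Type*} [CommRing R] {v : σ} {G : Set (MvPolynomial σ R)}
    (hG : G ⊆ supported R {v}ᶜ) {p : MvPolynomial σ R} (hp : p ∈ Ideal.span G) :
    pderiv v p ∈ Ideal.span G := by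
  induction hp using Submodule.span_induction with
  | mem p hp =>
    have hv : v ∉ p.vars := fun hv ↦ mem_supported.1 (hG hp) hv rfl
    rw [pderiv_eq_zero_of_notMem_vars hv]
    exact zero_mem _
  | zero =>
    rw [map_zero]
    exact zero_mem _
  | add p q _ _ hp hq =>
    rw [map_add]
    exact add_mem hp hq
  | smul a p hp hp' =>
    rw [smul_eq_mul, pderiv_mul]
    exact add_mem (Ideal.mul_mem_left _ _ hp) (Ideal.mul_mem_left _ _ hp')

theorem X_mul_add_notMem_span {R σ : Type*} [CommRing R] {v : σ} {G : Set (MvPolynomial σ R)}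
    (hG : G ⊆ supported R {v}ᶜ) {g h : MvPolynomial σ R} (hg : g ∈ supported R {v}ᶜ)
    (hh : h ∈ supported R {v}ᶜ) (hgG : g ∉ Ideal.span G) : X v * g + h ∉ Ideal.span G := by
  have pderiv_eq_zero {p : MvPolynomial σ R} (hp : p ∈ supported R {v}ᶜ) : pderiv v p = 0 :=
    pderiv_eq_zero_of_notMem_vars fun hv ↦ mem_supported.1 hp hv rfl
  intro h_mem
  have := pderiv_mem_span hG h_mem
  rw [map_add, pderiv_mul, pderiv_X_self, pderiv_eq_zero hg, pderiv_eq_zero hh] at this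
  exact hgG (by simpa using this)

variable {K : Type u} [Field K] {σ : Type}

/-- `I` is a prime ideal and `K[σ] ⧸ I` is Cohen-Macaulay of dimension `d`, expressed as: the depth
at the origin is at least `d` and the dimension is at most `d`. -/
structure IsCohenMacaulayPrime (I : Ideal (MvPolynomial σ K)) (d : ℕ) : Prop where
  isPrime : I.IsPrime
  extVanishesBelow : ExtVanishesBelow (originResidueField K σ) (MvPolynomial σ K ⧸ I) d
  ringKrullDim_le : ringKrullDim (MvPolynomial σ K ⧸ I) ≤ d

namespace IsCohenMacaulayPrime

theorem bot [Fintype σ] : IsCohenMacaulayPrime (⊥ : Ideal (MvPolynomial σ K)) (Fintype.card σ) where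
  isPrime := Ideal.isPrime_bot
  extVanishesBelow := extVanishesBelow_quotient_bot
  ringKrullDim_le := ringKrullDim_quotient_bot_le

theorem of_linear {κ : Type*} {v : σ} {G : Set (MvPolynomial σ K)} {g h : κ → MvPolynomial σ K}
    {i₀ : κ} {d : ℕ} (hG : G ⊆ supported K {v}ᶜ) (hg : ∀ i, g i ∈ supported K {v}ᶜ)
    (hh : ∀ i, h i ∈ supported K {v}ᶜ) (hN : IsCohenMacaulayPrime (Ideal.span G) (d + 1))
    (hgN : g i₀ ∉ Ideal.span G) (hcross : ∀ i, h i₀ * g i - g i₀ * h i ∈ Ideal.span G)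
    (hC : Ideal.span G ⊔ Ideal.span (Set.range g) = ⊤ ∨
      IsCohenMacaulayPrime (Ideal.span G ⊔ Ideal.span (Set.range g)) d ∧
        h i₀ ∉ Ideal.span G ⊔ Ideal.span (Set.range g)) :
    IsCohenMacaulayPrime (Ideal.span G ⊔ Ideal.span (Set.range fun i ↦ X v * g i + h i)) d := by
  have := hN.isPrime
  have hfN : X v * g i₀ + h i₀ ∉ Ideal.span G := X_mul_add_notMem_span hG (hg _) (hh _) hgN
  have h_regular : ∀ a, h i₀ * a ∈ Ideal.span G ⊔ Ideal.span (Set.range g) →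
      a ∈ Ideal.span G ⊔ Ideal.span (Set.range g) := by
    rcases hC with h_top | ⟨hC, hhC⟩
    · simp [h_top]
    · exact fun a ha ↦ (hC.isPrime.mem_or_mem ha).resolve_left hhC
  have h_extC : ExtVanishesBelow (originResidueField K σ)
      (MvPolynomial σ K ⧸ Ideal.span G ⊔ Ideal.span (Set.range g)) d := by
    rcases hC with h_top | ⟨hC, -⟩
    · have := Ideal.Quotient.subsingleton_iff.2 h_top
      exact ExtVanishesBelow.of_subsingleton
    · exact hC.extVanishesBelow
  have h_link := smul_sup_eq_smul_sup (N := Ideal.span G) (f := fun i ↦ X v * g i + h i) (g := g)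
    (i₀ := i₀) fun i ↦ by
      convert hcross i using 1
      ring
  have h_lt : Ideal.span G < Ideal.span G ⊔ Ideal.span (Set.range fun i ↦ X v * g i + h i) :=
    left_lt_sup.2 fun h_le ↦ hfN (h_le (Ideal.subset_span (Set.mem_range_self i₀)))
  have h_dim := (ringKrullDim_quotient_add_one_le h_lt).trans hN.ringKrullDim_le
  refine ⟨isPrime_span_sup_span_X_mul_add hG hg hh hgN hcross h_regular,
    .quotient_of_smul_sup_eq_smul_sup le_sup_left le_sup_left hfN hgN h_link hN.extVanishesBelow
      h_extC, ?_⟩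
  rw [Nat.cast_add_one] at h_dim
  exact ENat.WithBot.add_le_add_one_right_iff.1 h_dim

end IsCohenMacaulayPrime

end CohenMacaulayPrime

section RankBounds

/-- The condition that the top left block of a matrix with `rowBound` rows and `colBound` columns
has rank at most `rank`. The numbers of rows and columns of the block are recorded by their excess
over the rank, because `rowExcess * colExcess` is the codimension of the condition. -/
structure RankBound where
  rowExcess : ℕ
  colExcess : ℕ
  rank : ℕ
  deriving DecidableEq

namespace RankBound

/-- The number of rows of the block. -/
def rowBound (c : RankBound) : ℕ :=
  c.rowExcess + c.rank

/-- The number of columns of the block. -/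
def colBound (c : RankBound) : ℕ :=
  c.colExcess + c.rank

/-- The order on rank conditions in which the conditions of a one-sided ladder form a chain. -/
def Precedes (c c' : RankBound) : Prop :=
  c.rowExcess ≤ c'.rowExcess ∧ c.rowBound ≤ c'.rowBound ∧
    c'.colExcess ≤ c.colExcess ∧ c'.colBound ≤ c.colBound

theorem Precedes.refl (c : RankBound) : c.Precedes c :=
  ⟨le_rfl, le_rfl, le_rfl, le_rfl⟩

theorem Precedes.trans {c₁ c₂ c₃ : RankBound} (h₁₂ : c₁.Precedes c₂) (h₂₃ : c₂.Precedes c₃) :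
    c₁.Precedes c₃ :=
  ⟨h₁₂.1.trans h₂₃.1, h₁₂.2.1.trans h₂₃.2.1, h₂₃.2.2.1.trans h₁₂.2.2.1,
    h₂₃.2.2.2.trans h₁₂.2.2.2⟩

/-- The last entry of the block of `c` lies outside the block of every condition in `S`, and
likewise for the last cell of the `rowExcess × colExcess` rectangle of `c`. -/
def IsOuterCorner (c : RankBound) (S : Finset RankBound) : Prop :=
  ∀ c' ∈ S, c'.rowExcess < c.rowExcess ∧ c'.rowBound < c.rowBound ∨
    c'.colExcess < c.colExcess ∧ c'.colBound < c.colBound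

theorem IsOuterCorner.notMem {c : RankBound} {S : Finset RankBound} (hS : c.IsOuterCorner S) :
    c ∉ S := fun hc ↦ by
  have := hS c hc
  omega

theorem IsOuterCorner.excess_le {p q k : ℕ} {S : Finset RankBound}
    (hS : IsOuterCorner ⟨p + 1, q + 1, k⟩ S) (c : RankBound) (hc : c ∈ S) :
    c.rowExcess ≤ p ∨ c.colExcess ≤ q :=
  (hS c hc).imp (fun h ↦ Nat.le_of_lt_succ h.1) fun h ↦ Nat.le_of_lt_succ h.1

theorem IsOuterCorner.bound_le {p q k : ℕ} {S : Finset RankBound}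
    (hS : IsOuterCorner ⟨p + 1, q + 1, k⟩ S) (c : RankBound) (hc : c ∈ S) :
    c.rowBound ≤ p + k ∨ c.colBound ≤ q + k := by
  have := hS c hc
  simp only [rowBound, colBound] at this ⊢
  omega

/-- The condition `⟨p + 1, q + 1, k⟩` weakened to its block without the last row and to its block
without the last column, together with the conditions in `S`. -/
def cutCorner (p q k : ℕ) (S : Finset RankBound) : Finset RankBound :=
  insert ⟨p, q + 1, k⟩ (insert ⟨p + 1, q, k⟩ S)

theorem forall_mem_cutCorner {p q k : ℕ} {S : Finset RankBound} {P : RankBound → Prop} :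
    (∀ c ∈ cutCorner p q k S, P c) ↔ P ⟨p, q + 1, k⟩ ∧ P ⟨p + 1, q, k⟩ ∧ ∀ c ∈ S, P c := by
  simp only [cutCorner, Finset.forall_mem_insert]

theorem exists_insert_eq_of_nonempty {T : Finset RankBound} (hT : T.Nonempty) :
    ∃ c S, c ∉ S ∧ insert c S = T ∧
      ∀ c' ∈ S, toLex (c'.rowBound, c'.colBound) ≤ toLex (c.rowBound, c.colBound) := by
  obtain ⟨c, hc, hmax⟩ := T.exists_max_image (fun c ↦ toLex (c.rowBound, c.colBound)) hT
  exact ⟨c, T.erase c, Finset.notMem_erase c T, Finset.insert_erase hc,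
    fun c' hc' ↦ hmax c' (Finset.mem_of_mem_erase hc')⟩

/-- A chain of conditions on the blocks of an `m × n` matrix. -/
structure IsRankChain (m n : ℕ) (T : Finset RankBound) : Prop where
  isChain : IsChain Precedes (T : Set RankBound)
  bound_le : ∀ c ∈ T, c.rowBound ≤ m ∧ c.colBound ≤ n

namespace IsRankChain

variable {m n p q k : ℕ} {c : RankBound} {S : Finset RankBound}

theorem of_insert (h : IsRankChain m n (insert c S)) : IsRankChain m n S where
  isChain := h.isChain.mono (Finset.coe_subset.2 (Finset.subset_insert c S))
  bound_le c' hc' := h.bound_le c' (Finset.mem_insert_of_mem hc')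

theorem precedes_or_precedes (h : IsRankChain m n (insert c S)) (hc : c ∉ S) {c' : RankBound}
    (hc' : c' ∈ S) : c.Precedes c' ∨ c'.Precedes c :=
  h.isChain (Finset.mem_insert_self c S) (Finset.mem_insert_of_mem hc')
    (ne_of_mem_of_not_mem hc' hc).symm

theorem isOuterCorner (h : IsRankChain m n (insert c S)) (hc : c ∉ S)
    (hmax : ∀ c' ∈ S, toLex (c'.rowBound, c'.colBound) ≤ toLex (c.rowBound, c.colBound))
    (hmin : ∀ c' ∈ S, c.rowExcess ≤ c'.rowExcess → c'.colExcess < c.colExcess) :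
    c.IsOuterCorner S := by
  intro c' hc'
  have h_comparable := h.precedes_or_precedes hc hc'
  have h_max := Prod.Lex.toLex_le_toLex.1 (hmax c' hc')
  have h_min := hmin c' hc'
  simp only [Precedes, rowBound, colBound] at h_comparable h_max ⊢
  omega

theorem precedes_or_precedes_of_isOuterCorner (h : IsRankChain m n (insert ⟨p + 1, q + 1, k⟩ S))
    (hS : IsOuterCorner ⟨p + 1, q + 1, k⟩ S) {c' : RankBound} (hc' : c' ∈ S)
    (hrow : c.rowExcess ∈ Set.Icc p (p + 1)) (hcol : c.colExcess ∈ Set.Icc q (q + 1))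
    (hrow' : c.rowBound ∈ Set.Icc (p + k) (p + 1 + k))
    (hcol' : c.colBound ∈ Set.Icc (q + k) (q + 1 + k)) :
    c.Precedes c' ∨ c'.Precedes c := by
  have h_comparable := h.precedes_or_precedes hS.notMem hc'
  have h_outer := hS c' hc'
  simp only [Precedes, rowBound, colBound, Set.mem_Icc] at *
  omega

theorem cutCorner (h : IsRankChain m n (insert ⟨p + 1, q + 1, k⟩ S))
    (hS : IsOuterCorner ⟨p + 1, q + 1, k⟩ S) : IsRankChain m n (cutCorner p q k S) where
  isChain := by
    rw [RankBound.cutCorner, Finset.coe_insert, Finset.coe_insert]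
    refine (h.of_insert.isChain.insert fun c hc _ ↦ ?_).insert ?_
    · apply h.precedes_or_precedes_of_isOuterCorner hS hc <;> simp [rowBound, colBound]
    · refine Set.forall_mem_insert.2 ⟨fun _ ↦ .inl ?_, fun c hc _ ↦ ?_⟩
      · simp only [Precedes, rowBound, colBound]
        omega
      · apply h.precedes_or_precedes_of_isOuterCorner hS hc <;> simp [rowBound, colBound]
  bound_le := by
    have := h.bound_le _ (Finset.mem_insert_self _ _)
    refine forall_mem_cutCorner.2 ⟨?_, ?_, h.of_insert.bound_le⟩ <;>
    · simp only [rowBound, colBound] at this ⊢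
      omega

theorem insert_of_rank_succ (h : IsRankChain m n (insert ⟨p + 1, q + 1, k + 1⟩ S))
    (hS : IsOuterCorner ⟨p + 1, q + 1, k + 1⟩ S) :
    IsRankChain m n (insert ⟨p + 1, q + 1, k⟩ S) where
  isChain := by
    rw [Finset.coe_insert]
    refine h.of_insert.isChain.insert fun c hc _ ↦ ?_
    apply h.precedes_or_precedes_of_isOuterCorner hS hc <;> simp [rowBound, colBound] <;> omega
  bound_le := by
    have := h.bound_le _ (Finset.mem_insert_self _ _)
    refine Finset.forall_mem_insert _ _ _ |>.2 ⟨?_, h.of_insert.bound_le⟩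
    simp only [rowBound, colBound] at this ⊢
    omega

end IsRankChain

end RankBound

open RankBound

section RankIdeal

variable {R R' : Type*} [CommRing R] [CommRing R'] {m n : ℕ} {A : Matrix (Fin m) (Fin n) R}
  {S T : Finset RankBound} {c c' : RankBound}

/-- The minors that have to vanish for `A` to satisfy the rank conditions in `T`. -/
def rankMinors (A : Matrix (Fin m) (Fin n) R) (T : Finset RankBound) : Set R :=
  ⋃ c ∈ T, minors A (c.rank + 1) c.rowBound c.colBound

/-- The ideal of the minors that have to vanish for `A` to satisfy the rank conditions in `T`. -/
def rankIdeal (A : Matrix (Fin m) (Fin n) R) (T : Finset RankBound) : Ideal R :=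
  Ideal.span (rankMinors A T)

theorem rankIdeal_eq_iSup :
    rankIdeal A T = ⨆ c ∈ T, minorIdeal A (c.rank + 1) c.rowBound c.colBound := by
  simp only [rankIdeal, rankMinors, Ideal.span_iUnion, minorIdeal]

theorem rankIdeal_empty : rankIdeal A ∅ = ⊥ := by
  simp [rankIdeal_eq_iSup]

theorem rankIdeal_insert :
    rankIdeal A (insert c S) =
      minorIdeal A (c.rank + 1) c.rowBound c.colBound ⊔ rankIdeal A S := by
  simp only [rankIdeal_eq_iSup, Finset.iSup_insert]

theorem minorIdeal_le_rankIdeal (hc : c ∈ T) :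
    minorIdeal A (c.rank + 1) c.rowBound c.colBound ≤ rankIdeal A T :=
  Ideal.span_mono (Set.subset_biUnion_of_mem (u := fun c ↦
    minors A (RankBound.rank c + 1) c.rowBound c.colBound) hc)

theorem map_rankIdeal_le (φ : R →+* R') :
    (rankIdeal A T).map φ ≤ rankIdeal (A.map φ) T := by
  refine Ideal.map_le_iff_le_comap.2 (Ideal.span_le.2 fun x hx ↦ Ideal.subset_span ?_)
  obtain ⟨c, hc, hx⟩ := Set.mem_iUnion₂.1 hx
  exact Set.mem_biUnion hc (map_mem_minors φ hx)

theorem minorIdeal_eq_bot_of_excess_eq_zero (h : c.rowExcess = 0 ∨ c.colExcess = 0) :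
    minorIdeal A (c.rank + 1) c.rowBound c.colBound = ⊥ := by
  rcases h with h | h
  · exact minorIdeal_eq_bot_of_row_support (lo := 0) (by simp [rowBound, h])
      fun _ _ _ _ _ ↦ Nat.zero_le _
  · exact minorIdeal_eq_bot_of_col_support (lo := 0) (by simp [colBound, h])
      fun _ _ _ _ _ ↦ Nat.zero_le _

theorem rankIdeal_insert_of_excess_eq_zero (h : c.rowExcess = 0 ∨ c.colExcess = 0) :
    rankIdeal A (insert c S) = rankIdeal A S := by
  rw [rankIdeal_insert, minorIdeal_eq_bot_of_excess_eq_zero h, bot_sup_eq]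

theorem minorIdeal_le_of_excess_le (h : c.Precedes c' ∨ c'.Precedes c)
    (hrow : c.rowExcess ≤ c'.rowExcess) (hcol : c.colExcess ≤ c'.colExcess) :
    minorIdeal A (c.rank + 1) c.rowBound c.colBound ≤
      minorIdeal A (c'.rank + 1) c'.rowBound c'.colBound := by
  obtain ⟨p, q, k⟩ := c
  obtain ⟨p', q', k'⟩ := c'
  simp only [Precedes, rowBound, colBound] at h hrow hcol ⊢
  obtain ⟨d, rfl⟩ : ∃ d, k = k' + d := Nat.exists_eq_add_of_le (by omega)
  rw [Nat.add_right_comm]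
  rcases h with h | h
  · rw [← add_assoc q]
    exact (minorIdeal_add_col_le d).trans (minorIdeal_mono (by omega) (by omega))
  · rw [← add_assoc p]
    exact (minorIdeal_add_row_le d).trans (minorIdeal_mono (by omega) (by omega))

theorem rankIdeal_insert_of_excess_le (hc' : c' ∈ S) (h : c.Precedes c' ∨ c'.Precedes c)
    (hrow : c.rowExcess ≤ c'.rowExcess) (hcol : c.colExcess ≤ c'.colExcess) :
    rankIdeal A (insert c S) = rankIdeal A S := by
  rw [rankIdeal_insert, sup_eq_right]
  exact (minorIdeal_le_of_excess_le h hrow hcol).trans (minorIdeal_le_rankIdeal hc')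

end RankIdeal

section Cells

variable {S T : Finset RankBound} {c : RankBound}

/-- The union of the `rowExcess × colExcess` rectangles of the conditions in `T`. Its cardinality is
the codimension of the rank ideal of a generic matrix. -/
def cells (T : Finset RankBound) : Finset (ℕ × ℕ) :=
  T.biUnion fun c ↦ Finset.range c.rowExcess ×ˢ Finset.range c.colExcess

theorem mem_cells {z : ℕ × ℕ} :
    z ∈ cells T ↔ ∃ c ∈ T, z.1 < c.rowExcess ∧ z.2 < c.colExcess := by
  simp [cells]

theorem cells_insert :
    cells (insert c S) = Finset.range c.rowExcess ×ˢ Finset.range c.colExcess ∪ cells S :=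
  Finset.biUnion_insert

theorem card_cells_le {m n : ℕ} (hT : IsRankChain m n T) :
    (cells T).card ≤ m * n := by
  have h_sub : cells T ⊆ Finset.range m ×ˢ Finset.range n := fun z hz ↦ by
    obtain ⟨c, hc, hz⟩ := mem_cells.1 hz
    have := hT.bound_le c hc
    simp only [Finset.mem_product, Finset.mem_range, rowBound, colBound] at this ⊢
    omega
  simpa using Finset.card_le_card h_sub

theorem cells_insert_of_excess_eq_zero (h : c.rowExcess = 0 ∨ c.colExcess = 0) :
    cells (insert c S) = cells S := by
  rw [cells_insert, Finset.union_eq_right]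
  rcases h with h | h <;> simp [h]

theorem cells_insert_of_excess_le {c' : RankBound} (hc' : c' ∈ S)
    (hrow : c.rowExcess ≤ c'.rowExcess) (hcol : c.colExcess ≤ c'.colExcess) :
    cells (insert c S) = cells S := by
  rw [cells_insert, Finset.union_eq_right]
  intro z hz
  rw [Finset.mem_product, Finset.mem_range, Finset.mem_range] at hz
  exact mem_cells.2 ⟨c', hc', hz.1.trans_le hrow, hz.2.trans_le hcol⟩

theorem card_cells_insert_of_isOuterCorner {p q k : ℕ} (hS : IsOuterCorner ⟨p + 1, q + 1, k⟩ S) :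
    (cells (insert ⟨p + 1, q + 1, k⟩ S)).card =
      (cells (cutCorner p q k S)).card + 1 := by
  have h_notMem : (p, q) ∉ cells (cutCorner p q k S) := by
    simp only [mem_cells, not_exists, not_and, forall_mem_cutCorner]
    refine ⟨by omega, by omega, fun c hc ↦ ?_⟩
    have := hS.excess_le c hc
    omega
  rw [← Finset.card_insert_of_notMem h_notMem]
  congr 1
  ext ⟨x, y⟩
  simp only [cutCorner, cells_insert, Finset.mem_insert, Finset.mem_union, Finset.mem_product,
    Finset.mem_range, Prod.mk.injEq]
  rw [← or_assoc, ← or_assoc]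
  exact or_congr_left (by omega)

/-- The quantity on which the induction runs. -/
def complexity (T : Finset RankBound) : ℕ ×ₗ ℕ :=
  toLex ((cells T).card, ∑ c ∈ T, (c.rank + 1))

theorem complexity_lt_complexity_insert (hc : c ∉ S) (h : cells (insert c S) = cells S) :
    complexity S < complexity (insert c S) := by
  refine Prod.Lex.toLex_lt_toLex.2 (.inr ⟨by rw [h], ?_⟩)
  rw [Finset.sum_insert hc]
  omega

theorem complexity_insert_lt_complexity_insert {p q k : ℕ} (hc : ⟨p, q, k + 1⟩ ∉ S) :
    complexity (insert ⟨p, q, k⟩ S) < complexity (insert ⟨p, q, k + 1⟩ S) := by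
  refine Prod.Lex.toLex_lt_toLex.2 (.inr ⟨by rw [cells_insert, cells_insert], ?_⟩)
  calc ∑ c ∈ insert ⟨p, q, k⟩ S, (c.rank + 1)
    _ ≤ (k + 1) + ∑ c ∈ S, (c.rank + 1) := by
      by_cases h : (⟨p, q, k⟩ : RankBound) ∈ S
      · rw [Finset.insert_eq_of_mem h]
        exact Nat.le_add_left _ _
      · rw [Finset.sum_insert h]
    _ < ∑ c ∈ insert ⟨p, q, k + 1⟩ S, (c.rank + 1) := by
      rw [Finset.sum_insert hc]
      exact Nat.add_lt_add_right (Nat.lt_succ_self _) _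

theorem complexity_cutCorner_lt {p q k : ℕ} (hS : IsOuterCorner ⟨p + 1, q + 1, k⟩ S) :
    complexity (cutCorner p q k S) < complexity (insert ⟨p + 1, q + 1, k⟩ S) :=
  Prod.Lex.toLex_lt_toLex.2 (.inl (by
    rw [card_cells_insert_of_isOuterCorner hS]
    exact Nat.lt_succ_self _))

end Cells

end RankBounds

section GenericMatrix

open Matrix RankBound

variable {K : Type*} [Field K] {σ : Type*} {m n : ℕ}

variable (K) in
/-- The matrix of indeterminates whose entry at position `(x, y)` is the variable `e (x, y)`. -/
noncomputable def genericMatrix (e : Fin m × Fin n ≃ σ) :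
    Matrix (Fin m) (Fin n) (MvPolynomial σ K) :=
  of fun x y ↦ X (e (x, y))

theorem det_mem_of_forall_mem {R S ι : Type*} [CommRing R] [SetLike S R] [SubringClass S R]
    [Fintype ι] [DecidableEq ι] {s : S} {M : Matrix ι ι R} (hM : ∀ i j, M i j ∈ s) :
    M.det ∈ s := by
  rw [det_apply]
  refine sum_mem fun τ _ ↦ ?_
  rw [Units.smul_def]
  exact zsmul_mem (prod_mem fun i _ ↦ hM _ _) _

variable {e : Fin m × Fin n ≃ σ} {α : Fin m} {β : Fin n}

theorem genericMatrix_apply_mem_supported {x : Fin m} {y : Fin n} (h : (x, y) ≠ (α, β)) :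
    genericMatrix K e x y ∈ supported K {e (α, β)}ᶜ :=
  X_mem_supported.2 fun h' ↦ h (e.injective h')

theorem det_submatrix_genericMatrix_mem_supported {ι : Type*} [Fintype ι] [DecidableEq ι]
    {r : ι → Fin m} {c : ι → Fin n} (h : (∀ i, r i < α) ∨ ∀ j, c j < β) :
    ((genericMatrix K e).submatrix r c).det ∈ supported K {e (α, β)}ᶜ := by
  refine det_mem_of_forall_mem fun i j ↦ genericMatrix_apply_mem_supported fun h_eq ↦ ?_
  rw [Prod.mk.injEq] at h_eq
  exact h.elim (fun h ↦ (h i).ne h_eq.1) fun h ↦ (h j).ne h_eq.2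

theorem det_borderedMatrix_genericMatrix_mem_supported {k : ℕ} (i : MinorIndex k α β) :
    (borderedMatrix (genericMatrix K e) i.1.1 i.2.1 α β 0).det ∈ supported K {e (α, β)}ᶜ := by
  refine det_mem_of_forall_mem ?_
  rintro (x | x) (y | y)
  · exact genericMatrix_apply_mem_supported (by simp [(i.1.2 x).ne])
  · exact genericMatrix_apply_mem_supported (by simp [(i.1.2 x).ne])
  · exact genericMatrix_apply_mem_supported (by simp [(i.2.2 y).ne])
  · exact zero_mem _

theorem rankMinors_genericMatrix_subset_supported {T : Finset RankBound}
    (hT : ∀ c ∈ T, c.rowBound ≤ α ∨ c.colBound ≤ β) :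
    rankMinors (genericMatrix K e) T ⊆ supported K {e (α, β)}ᶜ := by
  intro x hx
  obtain ⟨c, hc, r, c', hr, hc', rfl⟩ := Set.mem_iUnion₂.1 hx
  exact det_submatrix_genericMatrix_mem_supported ((hT c hc).imp
    (fun h i ↦ (hr i).trans_le h) fun h j ↦ (hc' j).trans_le h)

theorem rankIdeal_genericMatrix_le_idealOfVars {T : Finset RankBound} :
    rankIdeal (genericMatrix K e) T ≤ idealOfVars σ K := by
  refine Ideal.span_le.2 fun x hx ↦ ?_
  obtain ⟨c, -, r, c', -, -, rfl⟩ := Set.mem_iUnion₂.1 hx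
  rw [det_succ_row_zero]
  exact Ideal.sum_mem _ fun j _ ↦ Ideal.mul_mem_right _ _
    (Ideal.mul_mem_left _ _ (Ideal.subset_span (Set.mem_range_self _)))

end GenericMatrix

section MatchingMatrix

open Matrix RankBound

variable {K : Type*} [Field K] {ι : Type*} {m n : ℕ} {r : ι → Fin m} {c : ι → Fin n}
  {T : Finset RankBound}

variable (K) in
open Classical in
/-- The `0-1` matrix with ones at the positions `(r i, c i)`. -/
noncomputable def matchingMatrix (r : ι → Fin m) (c : ι → Fin n) : Matrix (Fin m) (Fin n) K :=
  of fun x y ↦ if ∃ i, r i = x ∧ c i = y then 1 else 0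

theorem exists_of_matchingMatrix_ne_zero {x : Fin m} {y : Fin n}
    (h : matchingMatrix K r c x y ≠ 0) : ∃ i, r i = x ∧ c i = y := by
  by_contra h_none
  exact h (if_neg h_none)

theorem submatrix_matchingMatrix [DecidableEq ι] (hr : Function.Injective r)
    (hc : Function.Injective c) : (matchingMatrix K r c).submatrix r c = 1 := by
  ext i j
  have h : (∃ l, r l = r i ∧ c l = c j) ↔ i = j :=
    ⟨fun ⟨l, hi, hj⟩ ↦ (hr hi).symm.trans (hc hj), fun h ↦ ⟨i, rfl, congrArg c h⟩⟩
  simp [matchingMatrix, h, one_apply]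

theorem det_submatrix_genericMatrix_notMem_rankIdeal [Fintype ι] [DecidableEq ι] {σ : Type*}
    (e : Fin m × Fin n ≃ σ) (hr : Function.Injective r) (hc : Function.Injective c)
    (hT : rankIdeal (matchingMatrix K r c) T = ⊥) :
    ((genericMatrix K e).submatrix r c).det ∉ rankIdeal (genericMatrix K e) T := by
  intro h_mem
  let φ : MvPolynomial σ K →+* K := eval fun v ↦ matchingMatrix K r c (e.symm v).1 (e.symm v).2
  have hφ : (genericMatrix K e).map φ = matchingMatrix K r c := by
    ext x y
    simp [φ, genericMatrix]
  have h_image := map_rankIdeal_le φ (Ideal.mem_map_of_mem φ h_mem)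
  rw [hφ, hT, Ideal.mem_bot, RingHom.map_det, RingHom.mapMatrix_apply, ← submatrix_map, hφ,
    submatrix_matchingMatrix hr hc, det_one] at h_image
  exact one_ne_zero h_image

theorem minorIdeal_matchingMatrix_eq_bot {p q : ℕ} (hr : ∀ i, p ≤ r i) (hc : ∀ i, q ≤ c i)
    {c' : RankBound} (hc' : c'.rowExcess ≤ p ∨ c'.colExcess ≤ q) :
    minorIdeal (matchingMatrix K r c) (c'.rank + 1) c'.rowBound c'.colBound = ⊥ := by
  rcases hc' with h | h
  · refine minorIdeal_eq_bot_of_row_support (Nat.add_le_add_right h _) fun x y _ _ hxy ↦ ?_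
    obtain ⟨i, rfl, -⟩ := exists_of_matchingMatrix_ne_zero hxy
    exact hr i
  · refine minorIdeal_eq_bot_of_col_support (Nat.add_le_add_right h _) fun x y _ _ hxy ↦ ?_
    obtain ⟨i, -, rfl⟩ := exists_of_matchingMatrix_ne_zero hxy
    exact hc i

theorem rankIdeal_matchingMatrix_eq_bot {p q : ℕ} (hr : ∀ i, p ≤ r i) (hc : ∀ i, q ≤ c i)
    (hT : ∀ c' ∈ T, c'.rowExcess ≤ p ∨ c'.colExcess ≤ q) :
    rankIdeal (matchingMatrix K r c) T = ⊥ := by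
  simp only [rankIdeal_eq_iSup, iSup_eq_bot]
  exact fun c' hc' ↦ minorIdeal_matchingMatrix_eq_bot hr hc (hT c' hc')

end MatchingMatrix

section CornerStep

open Matrix RankBound

variable {m n p q k : ℕ} {S : Finset RankBound}

section RankIdeal

variable {R : Type*} [CommRing R] {A : Matrix (Fin m) (Fin n) R}

theorem rankIdeal_cutCorner :
    rankIdeal A (cutCorner p q k S) = minorIdeal A (k + 1) (p + k) (q + k + 1) ⊔
      minorIdeal A (k + 1) (p + k + 1) (q + k) ⊔ rankIdeal A S := by
  simp only [cutCorner, rankIdeal_insert, rowBound, colBound, Nat.add_right_comm _ 1 k, sup_assoc]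

theorem rankIdeal_cutCorner_sup_minorIdeal :
    rankIdeal A (cutCorner p q k S) ⊔ minorIdeal A k (p + k) (q + k) =
      minorIdeal A k (p + k) (q + k) ⊔ rankIdeal A S := by
  have h_le : minorIdeal A (k + 1) (p + k) (q + k + 1) ⊔ minorIdeal A (k + 1) (p + k + 1) (q + k) ≤
      minorIdeal A k (p + k) (q + k) :=
    sup_le (minorIdeal_add_col_le 1) minorIdeal_succ_row_le
  rw [rankIdeal_cutCorner, sup_right_comm, sup_eq_right.2 h_le]

theorem rankIdeal_cutCorner_sup_minorIdeal_succ :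
    rankIdeal A (cutCorner p q (k + 1) S) ⊔ minorIdeal A (k + 1) (p + (k + 1)) (q + (k + 1)) =
      rankIdeal A (insert ⟨p + 1, q + 1, k⟩ S) := by
  simp only [rankIdeal_cutCorner_sup_minorIdeal, rankIdeal_insert, rowBound, colBound,
    add_assoc, add_comm 1 k]

theorem rankIdeal_cutCorner_sup_span_det_borderedMatrix {α : Fin m} {β : Fin n}
    (hα : (α : ℕ) = p + k) (hβ : (β : ℕ) = q + k) :
    rankIdeal A (cutCorner p q k S) ⊔ Ideal.span
        (Set.range fun i : MinorIndex k α β ↦ (borderedMatrix A i.1.1 i.2.1 α β (A α β)).det) =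
      rankIdeal A (insert ⟨p + 1, q + 1, k⟩ S) := by
  simp only [rankIdeal_cutCorner, rankIdeal_insert, rowBound, colBound, Nat.add_right_comm _ 1 k]
  rw [← hα, ← hβ, minorIdeal_succ_eq_sup, sup_right_comm]

end RankIdeal

variable {K : Type*} [Field K] {σ : Type*} {e : Fin m × Fin n ≃ σ}

/-- The rows `p, …, p + k - 1` and the columns `q, …, q + k - 1`. -/
def diagonalIndex (p q k : ℕ) (hα : p + k < m) (hβ : q + k < n) :
    MinorIndex k (⟨p + k, hα⟩ : Fin m) (⟨q + k, hβ⟩ : Fin n) :=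
  (⟨fun i ↦ ⟨p + i, by omega⟩, fun i ↦ Fin.mk_lt_mk.2 (by omega)⟩,
    ⟨fun j ↦ ⟨q + j, by omega⟩, fun j ↦ Fin.mk_lt_mk.2 (by omega)⟩)

variable {hα : p + k < m} {hβ : q + k < n}

theorem diagonalIndex_fst_injective : Function.Injective (diagonalIndex p q k hα hβ).1.1 :=
  fun _ _ h ↦ Fin.ext (Nat.add_left_cancel (Fin.mk.inj h))

theorem diagonalIndex_snd_injective : Function.Injective (diagonalIndex p q k hα hβ).2.1 :=
  fun _ _ h ↦ Fin.ext (Nat.add_left_cancel (Fin.mk.inj h))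

theorem det_diagonalIndex_notMem_rankIdeal_cutCorner
    (hS : IsOuterCorner ⟨p + 1, q + 1, k⟩ S) :
    ((genericMatrix K e).submatrix (diagonalIndex p q k hα hβ).1.1
      (diagonalIndex p q k hα hβ).2.1).det ∉ rankIdeal (genericMatrix K e) (cutCorner p q k S) := by
  refine det_submatrix_genericMatrix_notMem_rankIdeal e diagonalIndex_fst_injective
    diagonalIndex_snd_injective (rankIdeal_matchingMatrix_eq_bot (p := p) (q := q)
      (fun i ↦ Nat.le_add_right _ _) (fun i ↦ Nat.le_add_right _ _) ?_)
  exact forall_mem_cutCorner.2 ⟨.inl le_rfl, .inr le_rfl, hS.excess_le⟩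

/-- The rows of the minor obtained from the minor `i` by adding the row `α`. -/
abbrev borderedRows {α : Fin m} {β : Fin n} (i : MinorIndex k α β) : Fin k ⊕ Unit → Fin m :=
  Sum.elim i.1.1 fun _ ↦ α

/-- The columns of the minor obtained from the minor `i` by adding the column `β`. -/
abbrev borderedCols {α : Fin m} {β : Fin n} (i : MinorIndex k α β) : Fin k ⊕ Unit → Fin n :=
  Sum.elim i.2.1 fun _ ↦ β

theorem borderedRows_diagonalIndex_injective :
    Function.Injective (borderedRows (diagonalIndex p q k hα hβ)) :=
  diagonalIndex_fst_injective.sumElim (Function.injective_of_subsingleton _)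
    fun i _ ↦ ((diagonalIndex p q k hα hβ).1.2 i).ne

theorem borderedCols_diagonalIndex_injective :
    Function.Injective (borderedCols (diagonalIndex p q k hα hβ)) :=
  diagonalIndex_snd_injective.sumElim (Function.injective_of_subsingleton _)
    fun i _ ↦ ((diagonalIndex p q k hα hβ).2.2 i).ne

theorem le_borderedRows_diagonalIndex (i : Fin k ⊕ Unit) :
    p ≤ borderedRows (diagonalIndex p q k hα hβ) i := by
  cases i <;> exact Nat.le_add_right _ _

theorem le_borderedCols_diagonalIndex (i : Fin k ⊕ Unit) :
    q ≤ borderedCols (diagonalIndex p q k hα hβ) i := by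
  cases i <;> exact Nat.le_add_right _ _

variable {hα : p + (k + 1) < m} {hβ : q + (k + 1) < n}

theorem succ_le_of_matchingMatrix_swap_ne_zero {x : Fin m} {y : Fin n}
    (hx : (x : ℕ) < p + (k + 1)) (hy : (y : ℕ) < q + (k + 1))
    (h : matchingMatrix K (borderedRows (diagonalIndex p q (k + 1) hα hβ))
      (borderedCols (diagonalIndex p q (k + 1) hα hβ) ∘ Equiv.swap (Sum.inl 0) (Sum.inr ())) x y
        ≠ 0) : p + 1 ≤ x := by
  obtain ⟨i | _, rfl, rfl⟩ := exists_of_matchingMatrix_ne_zero h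
  · have hi : i ≠ 0 := by
      rintro rfl
      simp at hy
    exact Nat.add_le_add_left (Nat.one_le_iff_ne_zero.2 (Fin.val_ne_zero_iff.2 hi)) p
  · exact absurd hx (lt_irrefl _)

theorem rankIdeal_matchingMatrix_swap_eq_bot (hS : IsOuterCorner ⟨p + 1, q + 1, k + 1⟩ S) :
    rankIdeal (matchingMatrix K (borderedRows (diagonalIndex p q (k + 1) hα hβ))
      (borderedCols (diagonalIndex p q (k + 1) hα hβ) ∘ Equiv.swap (Sum.inl 0) (Sum.inr ())))
        (insert ⟨p + 1, q + 1, k⟩ S) = ⊥ := by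
  rw [rankIdeal_insert, sup_eq_bot_iff]
  constructor
  · refine minorIdeal_eq_bot_of_row_support (lo := p + 1) le_rfl fun x y hx hy h ↦
      succ_le_of_matchingMatrix_swap_ne_zero ?_ ?_ h
    · simpa only [rowBound, add_assoc, add_comm 1 k] using hx
    · simpa only [colBound, add_assoc, add_comm 1 k] using hy
  · exact rankIdeal_matchingMatrix_eq_bot le_borderedRows_diagonalIndex
      (fun i ↦ le_borderedCols_diagonalIndex _) hS.excess_le

theorem det_submatrix_borderedRows_diagonalIndex_notMem_rankIdeal
    (hS : IsOuterCorner ⟨p + 1, q + 1, k + 1⟩ S) :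
    ((genericMatrix K e).submatrix (borderedRows (diagonalIndex p q (k + 1) hα hβ))
      (borderedCols (diagonalIndex p q (k + 1) hα hβ))).det ∉
        rankIdeal (genericMatrix K e) (insert ⟨p + 1, q + 1, k⟩ S) := by
  let τ : Equiv.Perm (Fin (k + 1) ⊕ Unit) := Equiv.swap (Sum.inl 0) (Sum.inr ())
  rw [Ideal.mem_iff_of_associated (associated_det_submatrix _ (Equiv.refl _) τ),
    submatrix_submatrix]
  exact det_submatrix_genericMatrix_notMem_rankIdeal e borderedRows_diagonalIndex_injective
    (borderedCols_diagonalIndex_injective.comp τ.injective)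
    (rankIdeal_matchingMatrix_swap_eq_bot hS)

theorem det_borderedMatrix_diagonalIndex_notMem_rankIdeal
    (hS : IsOuterCorner ⟨p + 1, q + 1, k + 1⟩ S) :
    (borderedMatrix (genericMatrix K e) (diagonalIndex p q (k + 1) hα hβ).1.1
      (diagonalIndex p q (k + 1) hα hβ).2.1 ⟨_, hα⟩ ⟨_, hβ⟩ 0).det ∉
        rankIdeal (genericMatrix K e) (insert ⟨p + 1, q + 1, k⟩ S) := by
  intro h_mem
  refine det_submatrix_borderedRows_diagonalIndex_notMem_rankIdeal (K := K) (e := e)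
    (hα := hα) (hβ := hβ) hS ?_
  rw [← borderedMatrix_eq_submatrix, det_borderedMatrix]
  refine add_mem (Ideal.mul_mem_left _ _ ?_) h_mem
  rw [← rankIdeal_cutCorner_sup_minorIdeal_succ]
  exact Ideal.mem_sup_right (det_submatrix_mem_minorIdeal (Fintype.card_fin _)
    (diagonalIndex p q (k + 1) hα hβ).1.2 (diagonalIndex p q (k + 1) hα hβ).2.2)

end CornerStep

section Induction

open Matrix RankBound

variable {K : Type u} [Field K] {σ : Type} {m n : ℕ} {e : Fin m × Fin n ≃ σ}
  {p q k : ℕ} {S T : Finset RankBound}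

theorem det_borderedMatrix_mul_det_sub_mem_rankIdeal {α : Fin m} {β : Fin n}
    (hα : (α : ℕ) = p + k) (hβ : (β : ℕ) = q + k)
    (hN : (rankIdeal (genericMatrix K e) (cutCorner p q k S)).IsPrime) {i₀ : MinorIndex k α β}
    (h₀ : ((genericMatrix K e).submatrix i₀.1.1 i₀.2.1).det ∉
      rankIdeal (genericMatrix K e) (cutCorner p q k S)) (i : MinorIndex k α β) :
    (borderedMatrix (genericMatrix K e) i₀.1.1 i₀.2.1 α β 0).det *
        ((genericMatrix K e).submatrix i.1.1 i.2.1).det -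
      ((genericMatrix K e).submatrix i₀.1.1 i₀.2.1).det *
        (borderedMatrix (genericMatrix K e) i.1.1 i.2.1 α β 0).det ∈
      rankIdeal (genericMatrix K e) (cutCorner p q k S) := by
  refine det_borderedMatrix_mul_det_sub_mem ?_ ?_ h₀ i 0
  · rw [rankIdeal_cutCorner, hα, hβ]
    exact le_sup_of_le_left le_sup_left
  · rw [rankIdeal_cutCorner, hα, hβ]
    exact le_sup_of_le_left le_sup_right

theorem isCohenMacaulayPrime_rankIdeal_insert {d : ℕ} (hα : p + k < m) (hβ : q + k < n)
    (hS : IsOuterCorner ⟨p + 1, q + 1, k⟩ S)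
    (hN : IsCohenMacaulayPrime (rankIdeal (genericMatrix K e) (cutCorner p q k S)) (d + 1))
    (hC : ∀ k', k = k' + 1 →
      IsCohenMacaulayPrime (rankIdeal (genericMatrix K e) (insert ⟨p + 1, q + 1, k'⟩ S)) d) :
    IsCohenMacaulayPrime (rankIdeal (genericMatrix K e) (insert ⟨p + 1, q + 1, k⟩ S)) d := by
  let α : Fin m := ⟨p + k, hα⟩
  let β : Fin n := ⟨q + k, hβ⟩
  let A := genericMatrix K e
  have h_supported : rankMinors A (cutCorner p q k S) ⊆ supported K {e (α, β)}ᶜ :=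
    rankMinors_genericMatrix_subset_supported <| forall_mem_cutCorner.2
      ⟨.inl le_rfl, .inr le_rfl, hS.bound_le⟩
  have h_diagonal := det_diagonalIndex_notMem_rankIdeal_cutCorner (K := K) (e := e) (hα := hα)
    (hβ := hβ) hS
  have h_step := IsCohenMacaulayPrime.of_linear (d := d) (κ := MinorIndex k α β)
    (g := fun i ↦ (A.submatrix i.1.1 i.2.1).det)
    (h := fun i ↦ (borderedMatrix A i.1.1 i.2.1 α β 0).det)
    h_supported
    (fun i ↦ det_submatrix_genericMatrix_mem_supported (.inl i.1.2))
    det_borderedMatrix_genericMatrix_mem_supported hN h_diagonal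
    (det_borderedMatrix_mul_det_sub_mem_rankIdeal rfl rfl hN.isPrime h_diagonal) ?_
  · rw [← rankIdeal_cutCorner_sup_span_det_borderedMatrix (α := α) (β := β) rfl rfl]
    simp only [det_borderedMatrix _ _ (genericMatrix K e α β)]
    exact h_step
  · rw [span_range_det_submatrix]
    cases k with
    | zero => exact .inl (by rw [minorIdeal_zero, sup_top_eq])
    | succ k =>
      have h_link := rankIdeal_cutCorner_sup_minorIdeal_succ (A := A) (p := p) (q := q) (k := k)
        (S := S)
      refine .inr (h_link ▸ ⟨hC k rfl, det_borderedMatrix_diagonalIndex_notMem_rankIdeal hS⟩)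

theorem isCohenMacaulayPrime_rankIdeal_of_isOuterCorner {c : RankBound}
    (hT : IsRankChain m n (insert c S)) (hS : c.IsOuterCorner S) (hrow : c.rowExcess ≠ 0)
    (hcol : c.colExcess ≠ 0)
    (ih : ∀ T, complexity T < complexity (insert c S) → IsRankChain m n T →
      IsCohenMacaulayPrime (rankIdeal (genericMatrix K e) T) (m * n - (cells T).card)) :
    IsCohenMacaulayPrime (rankIdeal (genericMatrix K e) (insert c S))
      (m * n - (cells (insert c S)).card) := by
  obtain ⟨_ | p, _ | q, k⟩ := c <;> try contradiction
  have h_block := hT.bound_le _ (Finset.mem_insert_self _ _)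
  have h_dim : m * n - (cells (cutCorner p q k S)).card =
      m * n - (cells (insert ⟨p + 1, q + 1, k⟩ S)).card + 1 := by
    have := card_cells_le hT
    have := card_cells_insert_of_isOuterCorner hS
    omega
  simp only [rowBound, colBound] at h_block
  refine isCohenMacaulayPrime_rankIdeal_insert (by omega) (by omega) hS ?_ ?_
  · rw [← h_dim]
    exact ih _ (complexity_cutCorner_lt hS) (hT.cutCorner hS)
  · rintro k rfl
    rw [show cells (insert ⟨p + 1, q + 1, k + 1⟩ S) = cells (insert ⟨p + 1, q + 1, k⟩ S) by
      rw [cells_insert, cells_insert]]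
    exact ih _ (complexity_insert_lt_complexity_insert hS.notMem) (hT.insert_of_rank_succ hS)

theorem isCohenMacaulayPrime_rankIdeal (hT : IsRankChain m n T) :
    IsCohenMacaulayPrime (rankIdeal (genericMatrix K e) T) (m * n - (cells T).card) := by
  induction h_complexity : complexity T using WellFoundedLT.induction generalizing T with
  | ind _ ih =>
    subst h_complexity
    replace ih (T : Finset RankBound) := fun hlt hT ↦ ih (complexity T) hlt (T := T) hT rfl
    obtain rfl | hne := T.eq_empty_or_nonempty
    · have := Fintype.ofEquiv _ e
      have h_card : Fintype.card σ = m * n := by simp [← Fintype.card_congr e]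
      rw [rankIdeal_empty, cells, Finset.biUnion_empty, Finset.card_empty, Nat.sub_zero, ← h_card]
      exact IsCohenMacaulayPrime.bot
    obtain ⟨c, S, hc, rfl, hmax⟩ := exists_insert_eq_of_nonempty hne
    have h_redundant (h_ideal : rankIdeal (genericMatrix K e) (insert c S) =
        rankIdeal (genericMatrix K e) S) (h_cells : cells (insert c S) = cells S) :
        IsCohenMacaulayPrime (rankIdeal (genericMatrix K e) (insert c S))
          (m * n - (cells (insert c S)).card) := by
      rw [h_ideal, h_cells]
      exact ih S (complexity_lt_complexity_insert hc h_cells) hT.of_insert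
    by_cases h_zero : c.rowExcess = 0 ∨ c.colExcess = 0
    · exact h_redundant (rankIdeal_insert_of_excess_eq_zero h_zero)
        (cells_insert_of_excess_eq_zero h_zero)
    by_cases h_dominated : ∃ c' ∈ S, c.rowExcess ≤ c'.rowExcess ∧ c.colExcess ≤ c'.colExcess
    · obtain ⟨c', hc', hrow, hcol⟩ := h_dominated
      exact h_redundant
        (rankIdeal_insert_of_excess_le hc' (hT.precedes_or_precedes hc hc') hrow hcol)
        (cells_insert_of_excess_le hc' hrow hcol)
    push Not at h_zero h_dominated
    exact isCohenMacaulayPrime_rankIdeal_of_isOuterCorner hT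
      (hT.isOuterCorner hc hmax h_dominated) h_zero.1 h_zero.2 ih

end Induction

section MixedLadder

open RankBound

/-- The variables of the `m × n` matrix in 0-based coordinates and with the columns reversed, so
that ladder regions become top left blocks. -/
def gridEquiv (m n : ℕ) : Fin m × Fin n ≃ (Set.Icc 1 m ×ˢ Set.Icc 1 n : Set (ℕ × ℕ)) where
  toFun z := ⟨(z.1 + 1, n - z.2), by simp only [Set.mem_prod, Set.mem_Icc]; omega⟩
  invFun z := (⟨z.1.1 - 1, by have := z.2.1; simp only [Set.mem_Icc] at this; omega⟩,
    ⟨n - z.1.2, by have := z.2.2; simp only [Set.mem_Icc] at this; omega⟩)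
  left_inv z := by
    ext <;> simp only [Nat.add_sub_cancel]
    omega
  right_inv z := by
    obtain ⟨⟨x, y⟩, hx, hy⟩ := z
    simp only [Set.mem_Icc] at hx hy
    exact Subtype.ext (Prod.ext (Nat.sub_add_cancel hx.1) (Nat.sub_sub_self hy.2))

/-- The generators of the `i`-th summand of `mixedLadderIdeal K V a b t n s`. -/
def ladderMinors (K : Type*) [Field K] (V : Set (ℕ × ℕ)) (a b t : ℕ → ℕ) (n i : ℕ) :
    Set (MvPolynomial V K) :=
  {p | ∃ r c : Fin (t i) → ℕ, StrictMono r ∧ StrictMono c ∧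
    ∃ h : ∀ x y : Fin (t i), (r x, c y) ∈ ladderRegion a b n i ∧ (r x, c y) ∈ V,
      p = (Matrix.of fun x y ↦ (X ⟨(r x, c y), (h x y).2⟩ : MvPolynomial V K)).det}

variable {K : Type u} [Field K] {a b t : ℕ → ℕ} {m n s i : ℕ}

theorem mixedLadderIdeal_eq_iSup_span_ladderMinors {V : Set (ℕ × ℕ)} :
    mixedLadderIdeal K V a b t n s = ⨆ i ∈ Set.Icc 1 s, Ideal.span (ladderMinors K V a b t n i) :=
  rfl

theorem ladderMinors_subset_minors :
    ladderMinors K (Set.Icc 1 m ×ˢ Set.Icc 1 n) a b t n i ⊆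
      minors (genericMatrix K (gridEquiv m n)) (t i) (a i) (n + 1 - b i) := by
  rintro _ ⟨r, c, -, -, h, rfl⟩
  let z (x y : Fin (t i)) := (gridEquiv m n).symm ⟨(r x, c y), (h x y).2⟩
  refine ⟨fun x ↦ (z x x).1, fun y ↦ (z y y).2, fun x ↦ ?_, fun y ↦ ?_, congrArg _ ?_⟩
  · obtain ⟨h_pos, h_le, -, -⟩ := (h x x).1
    exact Nat.lt_of_lt_of_le (Nat.sub_one_lt_of_lt h_pos) h_le
  · obtain ⟨-, -, h_ge, h_le⟩ := (h y y).1
    change n - c y < n + 1 - b i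
    simp only at h_ge h_le
    omega
  · refine Matrix.ext fun x y ↦ ?_
    exact congrArg (X : _ → MvPolynomial _ K)
      ((gridEquiv m n).apply_symm_apply ⟨(r x, c y), (h x y).2⟩)

theorem span_ladderMinors :
    Ideal.span (ladderMinors K (Set.Icc 1 m ×ˢ Set.Icc 1 n) a b t n i) =
      minorIdeal (genericMatrix K (gridEquiv m n)) (t i) (a i) (n + 1 - b i) := by
  refine le_antisymm (Ideal.span_mono ladderMinors_subset_minors)
    (minorIdeal_le_of_strictMono_of_strictAnti fun r c hr hc hra hcb ↦ Ideal.subset_span ?_)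
  refine ⟨fun x ↦ r x + 1, fun y ↦ n - c y, fun x x' hx ↦ Nat.succ_lt_succ (hr hx),
    fun y y' hy ↦ ?_, fun x y ↦ ⟨?_, (gridEquiv m n (r x, c y)).2⟩, rfl⟩
  · have := Fin.lt_def.1 (hc hy)
    simp only
    omega
  · have := hra x
    have := hcb y
    simp only [ladderRegion, Set.mem_ofPred_eq]
    omega

/-- The rank condition imposed by the `t i`-minors of the ladder region of `(a i, b i)`; it agrees
with the region when `1 ≤ t i ≤ a i` and `t i + b i ≤ n + 1`, so that no subtraction truncates. -/
def ladderBound (a b t : ℕ → ℕ) (n i : ℕ) : RankBound where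
  rowExcess := a i + 1 - t i
  colExcess := n + 2 - b i - t i
  rank := t i - 1

theorem mixedLadderIdeal_eq_rankIdeal
    (hsize : ∀ i ∈ Set.Icc 1 s, 1 ≤ t i ∧ t i ≤ a i ∧ t i + b i ≤ n + 1) :
    mixedLadderIdeal K (Set.Icc 1 m ×ˢ Set.Icc 1 n) a b t n s =
      rankIdeal (genericMatrix K (gridEquiv m n))
        ((Finset.Icc 1 s).image (ladderBound a b t n)) := by
  rw [mixedLadderIdeal_eq_iSup_span_ladderMinors, rankIdeal_eq_iSup, Finset.iSup_finset_image]
  simp only [Finset.mem_Icc, ← Set.mem_Icc]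
  refine iSup_congr fun i ↦ iSup_congr fun hi ↦ ?_
  have := hsize i hi
  rw [span_ladderMinors]
  congr <;> simp only [ladderBound, rowBound, colBound] <;> omega

theorem ladderBound_precedes_ladderBound
    (hsize : ∀ i ∈ Set.Icc 1 s, 1 ≤ t i ∧ t i ≤ a i ∧ t i + b i ≤ n + 1)
    (hmono : ∀ i, 1 ≤ i → i < s → a i ≤ a (i + 1) ∧ b i ≤ b (i + 1))
    (hgap : ∀ i, 2 ≤ i → i ≤ s →
      ((b (i - 1) : ℤ) - b i ≤ (t i : ℤ) - t (i - 1)) ∧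
      ((t i : ℤ) - t (i - 1) ≤ (a i : ℤ) - a (i - 1)))
    {i j : ℕ} (hi : 1 ≤ i) (hij : i ≤ j) (hj : j ≤ s) :
    (ladderBound a b t n i).Precedes (ladderBound a b t n j) := by
  induction j, hij using Nat.le_induction with
  | base => exact .refl _
  | succ j hij ih =>
    refine (ih (by omega)).trans ?_
    have h_size := hsize j ⟨by omega, by omega⟩
    have h_size_succ := hsize (j + 1) ⟨by omega, hj⟩
    have h_mono := hmono j (by omega) hj
    have h_gap := hgap (j + 1) (by omega) hj
    rw [Nat.add_sub_cancel] at h_gap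
    simp only [Precedes, ladderBound, rowBound, colBound]
    omega

theorem isRankChain_image_ladderBound
    (hrange : ∀ i ∈ Set.Icc 1 s, a i ≤ m ∧ 1 ≤ b i)
    (hsize : ∀ i ∈ Set.Icc 1 s, 1 ≤ t i ∧ t i ≤ a i ∧ t i + b i ≤ n + 1)
    (hmono : ∀ i, 1 ≤ i → i < s → a i ≤ a (i + 1) ∧ b i ≤ b (i + 1))
    (hgap : ∀ i, 2 ≤ i → i ≤ s →
      ((b (i - 1) : ℤ) - b i ≤ (t i : ℤ) - t (i - 1)) ∧
      ((t i : ℤ) - t (i - 1) ≤ (a i : ℤ) - a (i - 1))) :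
    IsRankChain m n ((Finset.Icc 1 s).image (ladderBound a b t n)) where
  isChain := by
    rw [Finset.coe_image, Finset.coe_Icc]
    rintro _ ⟨i, hi, rfl⟩ _ ⟨j, hj, rfl⟩ -
    exact (le_total i j).imp
      (fun hij ↦ ladderBound_precedes_ladderBound hsize hmono hgap hi.1 hij hj.2)
      fun hji ↦ ladderBound_precedes_ladderBound hsize hmono hgap hj.1 hji hi.2
  bound_le := by
    simp only [Finset.forall_mem_image, Finset.mem_Icc, ← Set.mem_Icc]
    intro i hi
    have := hrange i hi
    have := hsize i hi
    simp only [ladderBound, rowBound, colBound]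
    omega

end MixedLadder

theorem mixedLadderIdeal_prime_CM_general {m n s : ℕ} {a b t : ℕ → ℕ}
    (hrange : ∀ i ∈ Set.Icc 1 s, a i ≤ m ∧ 1 ≤ b i)
    (hsize : ∀ i ∈ Set.Icc 1 s, 1 ≤ t i ∧ t i ≤ a i ∧ t i + b i ≤ n + 1)
    (hmono : ∀ i, 1 ≤ i → i < s → a i ≤ a (i + 1) ∧ b i ≤ b (i + 1))
    (hgap : ∀ i, 2 ≤ i → i ≤ s →
      ((b (i - 1) : ℤ) - b i ≤ (t i : ℤ) - t (i - 1)) ∧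
      ((t i : ℤ) - t (i - 1) ≤ (a i : ℤ) - a (i - 1))) :
    (mixedLadderIdeal K (Set.Icc 1 m ×ˢ Set.Icc 1 n) a b t n s).IsPrime ∧
      QuotientIsCohenMacaulay (mixedLadderIdeal K (Set.Icc 1 m ×ˢ Set.Icc 1 n) a b t n s) := by
  rw [mixedLadderIdeal_eq_rankIdeal hsize]
  have h_chain := isRankChain_image_ladderBound hrange hsize hmono hgap
  have h := isCohenMacaulayPrime_rankIdeal (K := K) (e := gridEquiv m n) h_chain
  have := Finite.of_equiv _ (gridEquiv m n)
  exact ⟨h.isPrime, quotientIsCohenMacaulay_of_extVanishesBelow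
    rankIdeal_genericMatrix_le_idealOfVars h.extVanishesBelow h.ringKrullDim_le⟩

/-- A mixed ladder determinantal ideal of a one-sided ladder is prime, and
its quotient ring is Cohen-Macaulay.  Here `L` is a one-sided ladder of the 1-based `m × n`
grid with distinguished points `(a_1,b_1) ≤ … ≤ (a_s,b_s)` on its lower border (containing
all lower outside corners), `L = L_1 ∪ ⋯ ∪ L_s`, and the sizes `t_i` satisfy
`t_i ≤ min (a_i) (m - b_i + 1)` and `b_{i-1} - b_i < t_i - t_{i-1} < a_i - a_{i-1}`. -/
theorem mixedLadderIdeal_prime_CM (m n s : ℕ) (hm : 1 ≤ m) (hmn : m ≤ n) (hs : 1 ≤ s)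
    (L : Set (ℕ × ℕ)) (a b t : ℕ → ℕ)
    (hLsub : L ⊆ Set.Icc 1 m ×ˢ Set.Icc 1 n)
    (hcorner : ((1 : ℕ), n) ∈ L)
    (hladder : ∀ i h j' k' : ℕ, i < h → k' < j' →
      (i, j') ∈ L → (h, k') ∈ L → (i, k') ∈ L ∧ (h, j') ∈ L)
    (hrange : ∀ i ∈ Set.Icc 1 s, 1 ≤ a i ∧ a i ≤ m ∧ 1 ≤ b i ∧ b i ≤ n)
    (hmono : ∀ i, 1 ≤ i → i < s → a i ≤ a (i + 1) ∧ b i ≤ b (i + 1))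
    (hborder : ∀ i ∈ Set.Icc 1 s, (a i, b i) ∈ L ∧ (a i + 1, b i - 1) ∉ L)
    (hdecomp : L = ⋃ i ∈ Set.Icc 1 s, ladderRegion a b n i)
    (hcorners : ∀ p ∈ L, (p.1 + 1, p.2) ∉ L → (p.1, p.2 - 1) ∉ L →
      ∃ i ∈ Set.Icc 1 s, p = (a i, b i))
    (hsize : ∀ i ∈ Set.Icc 1 s, 1 ≤ t i ∧ t i ≤ min (a i) (m - b i + 1))
    (hgap : ∀ i, 2 ≤ i → i ≤ s →
      ((b (i - 1) : ℤ) - b i < (t i : ℤ) - t (i - 1)) ∧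
      ((t i : ℤ) - t (i - 1) < (a i : ℤ) - a (i - 1))) :
    (mixedLadderIdeal K (Set.Icc 1 m ×ˢ Set.Icc 1 n) a b t n s).IsPrime ∧
    QuotientIsCohenMacaulay (mixedLadderIdeal K (Set.Icc 1 m ×ˢ Set.Icc 1 n) a b t n s) := by
  refine mixedLadderIdeal_prime_CM_general (fun i hi ↦ ⟨(hrange i hi).2.1, (hrange i hi).2.2.1⟩)
    (fun i hi ↦ ?_) hmono fun i h_two hi ↦ (hgap i h_two hi).imp le_of_lt le_of_lt
  have := hrange i hi
  have := hsize i hi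
  omega
end
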